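/- arXiv:1804.11016 — 3 statements merged into one kernel-verified Lean document; each statement's English description precedes it below -/
import Mathlib

section
/- There exists a residual subset R of the metric space (F_(C,β), d_α) such that for every f ∈ R, for μ̂-almost every y ∈ [0,1] the conditional measure μ_y is mutually singular with the leaf measure λ_y, defined as the pushforward of one-dimensional Lebesgue measure on [0,1] under x ↦ (x, f(x,y)); in particular, it is not the case that μ_y is absolutely continuous with respect to λ_y for μ̂-a.e. y, so the foliation P_f is not leafwise absolutely continuous. -/
open MeasureTheory Set Filter Topology
open scoped ENNReal

noncomputable section

/-- The unit square `M = [0,1]²`. -/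
def MSq : Set (ℝ × ℝ) := unitInterval ×ˢ unitInterval

/-- Lower `(C,γ)`-bi-Hölder bound in the second variable. -/
def BiHolderLower (C γ : ℝ) (f : ℝ → ℝ → ℝ) : Prop :=
  ∀ x ∈ unitInterval, ∀ y₁ ∈ unitInterval, ∀ y₂ ∈ unitInterval, y₁ ≠ y₂ →
    C⁻¹ * |y₂ - y₁| ^ (1 / γ) ≤ |f x y₂ - f x y₁|

/-- Upper `(C,γ)`-Hölder bound in the second variable. -/
def BiHolderUpper (C γ : ℝ) (f : ℝ → ℝ → ℝ) : Prop :=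
  ∀ x ∈ unitInterval, ∀ y₁ ∈ unitInterval, ∀ y₂ ∈ unitInterval, y₁ ≠ y₂ →
    |f x y₂ - f x y₁| ≤ C * |y₂ - y₁| ^ γ

/-- Membership in the space `F_(C,γ)`: conditions (i)–(iv); `fx` plays the role of `∂f/∂x`. -/
structure IsFol (C γ : ℝ) (f fx : ℝ → ℝ → ℝ) : Prop where
  mapsTo : ∀ x ∈ unitInterval, ∀ y ∈ unitInterval, f x y ∈ unitInterval
  hasDeriv : ∀ y ∈ unitInterval, ∀ x ∈ unitInterval,
    HasDerivWithinAt (fun x' => f x' y) (fx x y) unitInterval x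
  derivCont : ContinuousOn (fun p : ℝ × ℝ => fx p.1 p.2) MSq
  eq_id : ∀ y ∈ unitInterval, f 0 y = y
  eq_bot : ∀ x ∈ unitInterval, f x 0 = 0
  eq_top : ∀ x ∈ unitInterval, f x 1 = 1
  lower : BiHolderLower C γ f
  upper : BiHolderUpper C γ f

/-- The space `F_(C,γ)`. -/
structure Fol (C γ : ℝ) where
  f : ℝ → ℝ → ℝ
  fx : ℝ → ℝ → ℝ
  isFol : IsFol C γ f fx

/-- The inverse of `y ↦ f x y` on `[0,1]`, i.e. the holonomy `h^f_{x,0}`. -/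
def hinv (f : ℝ → ℝ → ℝ) (x : ℝ) : ℝ → ℝ := Function.invFunOn (f x) unitInterval

/-- The `C⁰` distance over the square. -/
def C0dist (u v : ℝ → ℝ → ℝ) : ℝ :=
  sSup {r | ∃ x ∈ unitInterval, ∃ y ∈ unitInterval, r = |u x y - v x y|}

/-- The `α`-Hölder seminorm of the difference `h - k` on `[0,1]`. -/
def holDist (α : ℝ) (h k : ℝ → ℝ) : ℝ :=
  sSup {r | ∃ y₁ ∈ unitInterval, ∃ y₂ ∈ unitInterval, y₁ ≠ y₂ ∧
    r = |(h y₂ - k y₂) - (h y₁ - k y₁)| / |y₂ - y₁| ^ α}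

/-- The distance `d_α`, on raw data `(f, ∂f/∂x)`, `(g, ∂g/∂x)`. -/
def dalpha (α : ℝ) (f fx g gx : ℝ → ℝ → ℝ) : ℝ :=
  C0dist f g + C0dist fx gx +
    sSup {r | ∃ x ∈ unitInterval,
      r = max (holDist α (f x) (g x)) (holDist α (hinv f x) (hinv g x))}

/-- The distance `d_α` on `F_(C,γ)`. -/
def dalphaF {C γ : ℝ} (α : ℝ) (F G : Fol C γ) : ℝ := dalpha α F.f F.fx G.f G.fx

/-- Openness with respect to a distance function. -/
def IsOpenWrt {X : Type*} (d : X → X → ℝ) (s : Set X) : Prop :=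
  ∀ f ∈ s, ∃ ε > 0, ∀ g, d g f < ε → g ∈ s

/-- Density with respect to a distance function. -/
def IsDenseWrt {X : Type*} (d : X → X → ℝ) (s : Set X) : Prop :=
  ∀ f : X, ∀ ε > 0, ∃ g ∈ s, d g f < ε

/-- Lebesgue measure `μ` on the unit square `M`. -/
def muM : Measure (ℝ × ℝ) := volume.restrict MSq

/-- The projection `π_f(x,z) = f(x,·)⁻¹(z)` along the leaves. -/
def projF (f : ℝ → ℝ → ℝ) : ℝ × ℝ → ℝ := fun p => hinv f p.1 p.2

/-- The quotient measure `μ̂ = (π_f)_* μ`. -/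
def quotM {C γ : ℝ} (F : Fol C γ) : Measure ℝ := muM.map (projF F.f)

/-- The leaf `L_y = {(x, f(x,y)) : x ∈ [0,1]}`. -/
def Leaf {C γ : ℝ} (F : Fol C γ) (y : ℝ) : Set (ℝ × ℝ) :=
  (fun x => (x, F.f x y)) '' unitInterval

/-- `(ν_y)` is a Rokhlin disintegration of Lebesgue measure on the square w.r.t. `π_f`. -/
def IsDisint {C γ : ℝ} (F : Fol C γ) (ν : ℝ → Measure (ℝ × ℝ)) : Prop :=
  (∀ y, IsProbabilityMeasure (ν y)) ∧
  (∀ E : Set (ℝ × ℝ), MeasurableSet E → Measurable fun y => ν y E) ∧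
  (∀ᵐ y ∂quotM F, ν y (Leaf F y) = 1) ∧
  (∀ E : Set (ℝ × ℝ), MeasurableSet E → muM E = ∫⁻ y, ν y E ∂quotM F)

/-- The element `P_i` of the partition `P_{f,n}`. -/
def Pelt (f : ℝ → ℝ → ℝ) (n i : ℕ) : Set (ℝ × ℝ) :=
  {p | p.1 ∈ unitInterval ∧ f p.1 ((i : ℝ) / 2 ^ n) ≤ p.2 ∧ p.2 < f p.1 (((i : ℝ) + 1) / 2 ^ n)}

/-- `Ĩ = [b₁,b₂] × [0,1]`. -/
def Itilde (b₁ b₂ : ℝ) : Set (ℝ × ℝ) := Icc b₁ b₂ ×ˢ unitInterval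

/-- The set `A_{n,m,I}`. -/
def Aset (C γ : ℝ) (n m : ℕ) (b₁ b₂ : ℝ) : Set (Fol C γ) :=
  {F | ∀ i < 2 ^ n,
    muM (Pelt F.f n i ∩ Itilde b₁ b₂) / muM (Pelt F.f n i) < 1 / (m : ℝ≥0∞) ∨
    1 - 1 / (m : ℝ≥0∞) < muM (Pelt F.f n i ∩ Itilde b₁ b₂) / muM (Pelt F.f n i)}

/-- The set `B_{m,I}`. -/
def Bset (C γ : ℝ) (m : ℕ) (b₁ b₂ : ℝ) : Set (Fol C γ) := ⋃ n : ℕ, Aset C γ n m b₁ b₂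

/-- The leaf measure `λ_y`: pushforward of 1-dimensional Lebesgue measure on `[0,1]`
under `x ↦ (x, f(x,y))`. -/
def leafMeas {C γ : ℝ} (F : Fol C γ) (y : ℝ) : Measure (ℝ × ℝ) :=
  (volume.restrict unitInterval).map fun x => (x, F.f x y)

/-! ### Interpolation operators -/

/-- The clamp function. -/
def cl (t : ℝ) : ℝ := max 0 (min 1 t)

/-- Interpolation with profile `ψ`. -/
def LL (ψ : ℝ → ℝ) (N : ℕ) (a : ℕ → ℝ) (y : ℝ) : ℝ :=
  a 0 + ∑ j ∈ Finset.range N, (a (j + 1) - a j) * ψ ((N : ℝ) * y - j)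

lemma cl_of_nonpos {t : ℝ} (h : t ≤ 0) : cl t = 0 := by
  unfold cl; exact max_eq_left (le_trans (min_le_right _ _) h)

lemma cl_of_one_le {t : ℝ} (h : 1 ≤ t) : cl t = 1 := by
  unfold cl; rw [min_eq_left h]; norm_num

lemma cl_of_mem {t : ℝ} (h : 0 ≤ t) (h1 : t ≤ 1) : cl t = t := by
  unfold cl; rw [min_eq_right h1, max_eq_right h]

lemma cl_mem (t : ℝ) : cl t ∈ unitInterval := by
  unfold cl
  exact ⟨le_max_left _ _, max_le zero_le_one (min_le_left _ _)⟩

lemma cl_mono : Monotone cl := by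
  intro a b h
  unfold cl
  gcongr

lemma cl_cont : Continuous cl := by unfold cl; fun_prop

/-- Existence of an index. -/
def idx (N : ℕ) (y : ℝ) : ℕ := min ⌊(N : ℝ) * y⌋₊ (N - 1)

lemma idx_lt {N : ℕ} (hN : 0 < N) (y : ℝ) : idx N y < N := by
  unfold idx; omega

lemma idx_mono (N : ℕ) {y₁ y₂ : ℝ} (h : y₁ ≤ y₂) : idx N y₁ ≤ idx N y₂ := by
  unfold idx; gcongr

lemma idx_le {N : ℕ} {y : ℝ} (hy : y ∈ unitInterval) : (idx N y : ℝ) ≤ N * y := by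
  have h0 : (0 : ℝ) ≤ N * y := mul_nonneg (Nat.cast_nonneg _) hy.1
  refine le_trans ?_ (Nat.floor_le h0)
  exact_mod_cast min_le_left _ _

lemma le_idx {N : ℕ} (hN : 0 < N) {y : ℝ} (hy : y ∈ unitInterval) :
    (N : ℝ) * y ≤ idx N y + 1 := by
  unfold idx
  rcases min_choice ⌊(N : ℝ) * y⌋₊ (N - 1) with h | h
  · rw [h]; exact (Nat.lt_floor_add_one _).le
  · rw [h, Nat.cast_sub (by omega)]
    have : (N : ℝ) * y ≤ N * 1 := mul_le_mul_of_nonneg_left hy.2 (Nat.cast_nonneg _)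
    push_cast; linarith

lemma LL_eq {ψ : ℝ → ℝ} (h0 : ∀ t ≤ 0, ψ t = 0) (h1 : ∀ t, 1 ≤ t → ψ t = 1)
    {N i : ℕ} (hi : i < N) (a : ℕ → ℝ) {y : ℝ} (hy1 : (i : ℝ) ≤ N * y) (hy2 : (N : ℝ) * y ≤ i + 1) :
    LL ψ N a y = a i + (a (i + 1) - a i) * ψ (N * y - i) := by
  unfold LL
  rw [← Finset.sum_subset (Finset.range_mono (Nat.succ_le_of_lt hi)), Finset.sum_range_succ]
  · have : ∑ j ∈ Finset.range i, (a (j + 1) - a j) * ψ ((N : ℝ) * y - j)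
        = ∑ j ∈ Finset.range i, (a (j + 1) - a j) := by
      refine Finset.sum_congr rfl fun j hj => ?_
      have hj' : (j : ℝ) + 1 ≤ i := by exact_mod_cast Finset.mem_range.1 hj
      rw [h1 _ (by linarith), mul_one]
    rw [this, Finset.sum_range_sub]; ring
  · intro j _ hj
    have hj' : (i : ℝ) + 1 ≤ j := by
      have : ¬ j < i + 1 := by simpa using hj
      exact_mod_cast not_lt.1 this
    rw [h0 _ (by linarith), mul_zero]

lemma LL_cl_eq {N i : ℕ} (hi : i < N) (a : ℕ → ℝ) {y : ℝ} (hy1 : (i : ℝ) ≤ N * y)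
    (hy2 : (N : ℝ) * y ≤ i + 1) :
    LL cl N a y = a i + (a (i + 1) - a i) * (N * y - i) := by
  rw [LL_eq (fun t ht => cl_of_nonpos ht) (fun t ht => cl_of_one_le ht) hi a hy1 hy2,
    cl_of_mem (by linarith) (by linarith)]

lemma sum_cl {N : ℕ} (hN : 0 < N) {y : ℝ} (hy : y ∈ unitInterval) :
    ∑ j ∈ Finset.range N, cl ((N : ℝ) * y - j) = N * y := by
  have := LL_cl_eq (idx_lt hN y) (fun i => (i : ℝ)) (idx_le hy) (le_idx hN hy)
  unfold LL at this
  simp only [Nat.cast_zero, Nat.cast_add, Nat.cast_one, add_sub_cancel_left, one_mul, zero_add]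
    at this
  rw [this]; ring

lemma sum_cl' {K : ℕ} (hK : 0 < K) (t : ℝ) :
    ∑ j ∈ Finset.range K, cl ((K : ℝ) * t - j) = K * cl t := by
  have hK' : (0 : ℝ) < K := by exact_mod_cast hK
  rcases le_total t 0 with h | h
  · rw [cl_of_nonpos h, mul_zero]
    refine Finset.sum_eq_zero fun j _ => cl_of_nonpos ?_
    have := mul_nonpos_of_nonneg_of_nonpos hK'.le h
    have : (0 : ℝ) ≤ j := Nat.cast_nonneg _
    linarith
  rcases le_total t 1 with h1 | h1
  · rw [sum_cl hK ⟨h, h1⟩, cl_of_mem h h1]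
  · rw [cl_of_one_le h1]
    have : ∀ j ∈ Finset.range K, cl ((K : ℝ) * t - j) = 1 := by
      intro j hj
      refine cl_of_one_le ?_
      have hj' : (j : ℝ) + 1 ≤ K := by exact_mod_cast Finset.mem_range.1 hj
      nlinarith
    rw [Finset.sum_congr rfl this]; simp

lemma LL_zero {ψ : ℝ → ℝ} (h0 : ∀ t ≤ 0, ψ t = 0) (N : ℕ) (a : ℕ → ℝ) :
    LL ψ N a 0 = a 0 := by
  unfold LL
  rw [Finset.sum_eq_zero, add_zero]
  intro j _
  rw [h0 _ (by simp), mul_zero]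

lemma LL_one {ψ : ℝ → ℝ} (h1 : ∀ t, 1 ≤ t → ψ t = 1) (N : ℕ) (a : ℕ → ℝ) :
    LL ψ N a 1 = a N := by
  unfold LL
  have : ∀ j ∈ Finset.range N, (a (j + 1) - a j) * ψ ((N : ℝ) * 1 - j) = a (j + 1) - a j := by
    intro j hj
    have hj' : (j : ℝ) + 1 ≤ N := by exact_mod_cast Finset.mem_range.1 hj
    rw [h1 _ (by linarith), mul_one]
  rw [Finset.sum_congr rfl this, Finset.sum_range_sub]; ring

/-- Two-sided Lipschitz bounds for interpolation. -/
lemma LL_lip {ψ : ℝ → ℝ} {l L : ℝ}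
    (hψ : ∀ t₁ t₂, t₁ ≤ t₂ → l * (cl t₂ - cl t₁) ≤ ψ t₂ - ψ t₁ ∧ ψ t₂ - ψ t₁ ≤ L * (cl t₂ - cl t₁))
    (hl : 0 ≤ l)
    {N : ℕ} (hN : 0 < N) {a : ℕ → ℝ} {m M : ℝ} (hm : 0 ≤ m)
    (ha : ∀ j < N, m / N ≤ a (j + 1) - a j ∧ a (j + 1) - a j ≤ M / N)
    {y₁ y₂ : ℝ} (hy₁ : y₁ ∈ unitInterval) (hy₂ : y₂ ∈ unitInterval) (h : y₁ ≤ y₂) :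
    l * m * (y₂ - y₁) ≤ LL ψ N a y₂ - LL ψ N a y₁ ∧
      LL ψ N a y₂ - LL ψ N a y₁ ≤ L * M * (y₂ - y₁) := by
  have hN' : (0 : ℝ) < N := by exact_mod_cast hN
  have e : LL ψ N a y₂ - LL ψ N a y₁ = ∑ j ∈ Finset.range N,
      (a (j + 1) - a j) * (ψ ((N : ℝ) * y₂ - j) - ψ ((N : ℝ) * y₁ - j)) := by
    unfold LL
    rw [add_sub_add_left_eq_sub, ← Finset.sum_sub_distrib]
    exact Finset.sum_congr rfl fun j _ => by ring
  have key : ∀ c : ℝ, c * (y₂ - y₁) = ∑ j ∈ Finset.range N,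
      (c / N) * (cl ((N : ℝ) * y₂ - j) - cl ((N : ℝ) * y₁ - j)) := by
    intro c
    rw [← Finset.mul_sum, Finset.sum_sub_distrib, sum_cl hN hy₁, sum_cl hN hy₂]
    field_simp
  have hle : ∀ j : ℕ, (N : ℝ) * y₁ - j ≤ N * y₂ - j := fun j => by
    have := mul_le_mul_of_nonneg_left h hN'.le
    linarith
  have hcl : ∀ j : ℕ, 0 ≤ cl ((N : ℝ) * y₂ - j) - cl ((N : ℝ) * y₁ - j) := fun j =>
    sub_nonneg.2 (cl_mono (hle j))
  have hmN : 0 ≤ m / N := by positivity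
  rw [e]
  constructor
  · rw [key]
    refine Finset.sum_le_sum fun j hj => ?_
    have hj := ha j (Finset.mem_range.1 hj)
    have h2 := (hψ _ _ (hle j)).1
    calc l * m / N * (cl ((N : ℝ) * y₂ - j) - cl ((N : ℝ) * y₁ - j))
        = (m / N) * (l * (cl ((N : ℝ) * y₂ - j) - cl ((N : ℝ) * y₁ - j))) := by ring
      _ ≤ _ := mul_le_mul hj.1 h2 (mul_nonneg hl (hcl j)) (hmN.trans hj.1)
  · rw [key]
    refine Finset.sum_le_sum fun j hj => ?_
    have hj := ha j (Finset.mem_range.1 hj)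
    have h2 := (hψ _ _ (hle j)).2
    have h1 := (hψ _ _ (hle j)).1
    calc _ ≤ (M / N) * (L * (cl ((N : ℝ) * y₂ - j) - cl ((N : ℝ) * y₁ - j))) :=
          mul_le_mul hj.2 h2 (le_trans (mul_nonneg hl (hcl j)) h1) (hmN.trans (hj.1.trans hj.2))
      _ = _ := by ring

/-- Linear interpolation preserves convex lower bounds of increments. -/
lemma LL_convex {φ : ℝ → ℝ} (hφ : ConvexOn ℝ (Ici 0) φ) {N : ℕ} (hN : 0 < N) {a : ℕ → ℝ}
    (ha : ∀ p q, p ≤ q → q ≤ N → φ (((q : ℝ) - p) / N) ≤ a q - a p)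
    {y₁ y₂ : ℝ} (hy₁ : y₁ ∈ unitInterval) (hy₂ : y₂ ∈ unitInterval) (h : y₁ ≤ y₂) :
    φ (y₂ - y₁) ≤ LL cl N a y₂ - LL cl N a y₁ := by
  have hN' : (0 : ℝ) < N := by exact_mod_cast hN
  rw [LL_cl_eq (idx_lt hN y₁) a (idx_le hy₁) (le_idx hN hy₁),
    LL_cl_eq (idx_lt hN y₂) a (idx_le hy₂) (le_idx hN hy₂)]
  have hi := idx_lt hN y₁
  have hj := idx_lt hN y₂
  have hij := idx_mono N h
  have hs0 := idx_le (N := N) hy₁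
  have hs1 := le_idx hN hy₁
  have ht0 := idx_le (N := N) hy₂
  have ht1 := le_idx hN hy₂
  generalize idx N y₁ = i at *
  generalize idx N y₂ = j at *
  have hNy := mul_le_mul_of_nonneg_left h hN'.le
  have hijR : (i : ℝ) ≤ j := by exact_mod_cast hij
  obtain ⟨s, hs⟩ : ∃ s, s = (N : ℝ) * y₁ - i := ⟨_, rfl⟩
  obtain ⟨t, ht⟩ : ∃ t, t = (N : ℝ) * y₂ - j := ⟨_, rfl⟩
  rw [← hs, ← ht]
  have hdiff : y₂ - y₁ = ((j : ℝ) - i + (t - s)) / N := by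
    rw [hs, ht]; field_simp; ring
  have h1 := ha i j hij hj.le
  have h2 := ha (i + 1) (j + 1) (by omega) (by omega)
  push_cast at h2
  rw [show ((j : ℝ) + 1 - (i + 1)) = j - i by ring] at h2
  have hφ2 : ∀ x y a b : ℝ, 0 ≤ x → 0 ≤ y → 0 ≤ a → 0 ≤ b → a + b = 1 →
      φ (a * x + b * y) ≤ a * φ x + b * φ y := fun x y a b hx hy ha hb hab =>
    hφ.2 hx hy ha hb hab
  rcases le_or_gt s t with hst | hst
  · have h3 := ha i (j + 1) (by omega) (by omega)
    push_cast at h3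
    have hc := hφ2 (((j : ℝ) - i) / N) (((j : ℝ) + 1 - i) / N) (1 - (t - s)) (t - s)
      (div_nonneg (by linarith) hN'.le) (div_nonneg (by linarith) hN'.le)
      (by linarith) (by linarith) (by ring)
    rw [hdiff]
    have e1 : ((j : ℝ) - i + (t - s)) / N
        = (1 - (t - s)) * (((j : ℝ) - i) / N) + (t - s) * (((j : ℝ) + 1 - i) / N) := by
      field_simp; ring
    rw [e1]
    refine hc.trans ?_
    have m1 := mul_le_mul_of_nonneg_left h1 (show 0 ≤ 1 - t by linarith)
    have m2 := mul_le_mul_of_nonneg_left h2 (show 0 ≤ s by linarith)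
    have m3 := mul_le_mul_of_nonneg_left h3 (show 0 ≤ t - s by linarith)
    linarith
  · have hij' : i + 1 ≤ j := by
      by_contra hcon
      have : i = j := by omega
      subst this
      linarith
    have hijR' : (i : ℝ) + 1 ≤ j := by exact_mod_cast hij'
    have h3 := ha (i + 1) j hij' hj.le
    push_cast at h3
    have hc := hφ2 (((j : ℝ) - i) / N) (((j : ℝ) - (i + 1)) / N) (1 - (s - t)) (s - t)
      (div_nonneg (by linarith) hN'.le) (div_nonneg (by linarith) hN'.le)
      (by linarith) (by linarith) (by ring)
    rw [hdiff]
    have e1 : ((j : ℝ) - i + (t - s)) / N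
        = (1 - (s - t)) * (((j : ℝ) - i) / N) + (s - t) * (((j : ℝ) - (i + 1)) / N) := by
      field_simp; ring
    rw [e1]
    refine hc.trans ?_
    have m1 := mul_le_mul_of_nonneg_left h1 (show 0 ≤ 1 - s by linarith)
    have m2 := mul_le_mul_of_nonneg_left h2 (show 0 ≤ t by linarith)
    have m3 := mul_le_mul_of_nonneg_left h3 (show 0 ≤ s - t by linarith)
    linarith

/-- Linear interpolation is close to the function. -/
lemma LL_close_gen {ψ : ℝ → ℝ} (h0 : ∀ t ≤ 0, ψ t = 0) (h1 : ∀ t, 1 ≤ t → ψ t = 1)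
    (h01 : ∀ t, ψ t ∈ unitInterval) {N : ℕ} (hN : 0 < N) {u : ℝ → ℝ} {ω : ℝ}
    (hu : ∀ y ∈ unitInterval, ∀ y' ∈ unitInterval, |y - y'| ≤ 1 / N → |u y - u y'| ≤ ω)
    {y : ℝ} (hy : y ∈ unitInterval) :
    |LL ψ N (fun i => u ((i : ℝ) / N)) y - u y| ≤ ω := by
  have hN' : (0 : ℝ) < N := by exact_mod_cast hN
  rw [LL_eq h0 h1 (idx_lt hN y) _ (idx_le hy) (le_idx hN hy)]
  have hi := idx_lt hN y
  have hs0 := idx_le (N := N) hy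
  have hs1 := le_idx hN hy
  generalize idx N y = i at *
  have hiN : (i : ℝ) + 1 ≤ N := by exact_mod_cast hi
  have hi0 : (0 : ℝ) ≤ i := Nat.cast_nonneg _
  have m1 : (i : ℝ) / N ∈ unitInterval := ⟨by positivity, by rw [div_le_one hN']; linarith⟩
  have m2 : ((i + 1 : ℕ) : ℝ) / N ∈ unitInterval := ⟨by positivity, by
    rw [div_le_one hN']; push_cast; linarith⟩
  have b1 := hu _ m1 y hy (by
    rw [abs_sub_comm, abs_of_nonneg, sub_le_iff_le_add, ← add_div, le_div_iff₀ hN']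
    · linarith
    · rw [sub_nonneg, div_le_iff₀ hN']; linarith)
  have b2 := hu _ m2 y hy (by
    push_cast
    rw [abs_of_nonneg, sub_le_iff_le_add, div_le_iff₀ hN', add_mul, div_mul_cancel₀ _ hN'.ne']
    · linarith
    · rw [sub_nonneg, le_div_iff₀ hN']; linarith)
  obtain ⟨s, hs⟩ : ∃ s, s = ψ ((N : ℝ) * y - i) := ⟨_, rfl⟩
  rw [← hs]
  rw [abs_le] at b1 b2 ⊢
  have s0 : 0 ≤ s := hs ▸ (h01 _).1
  have s1 : 0 ≤ 1 - s := sub_nonneg.2 (hs ▸ (h01 _).2)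
  constructor
  · nlinarith [mul_le_mul_of_nonneg_left b1.1 s1, mul_le_mul_of_nonneg_left b2.1 s0]
  · nlinarith [mul_le_mul_of_nonneg_left b1.2 s1, mul_le_mul_of_nonneg_left b2.2 s0]

lemma LL_close {N : ℕ} (hN : 0 < N) {u : ℝ → ℝ} {ω : ℝ}
    (hu : ∀ y ∈ unitInterval, ∀ y' ∈ unitInterval, |y - y'| ≤ 1 / N → |u y - u y'| ≤ ω)
    {y : ℝ} (hy : y ∈ unitInterval) :
    |LL cl N (fun i => u ((i : ℝ) / N)) y - u y| ≤ ω :=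
  LL_close_gen (fun _ ht => cl_of_nonpos ht) (fun _ ht => cl_of_one_le ht) cl_mem hN hu hy

/-! ### Basic facts on foliations -/

section FolBasics
variable {C β : ℝ}

lemma Fol.upper' (hβ : 0 < β) (F : Fol C β) {x : ℝ} (hx : x ∈ unitInterval)
    {y₁ y₂ : ℝ} (h₁ : y₁ ∈ unitInterval) (h₂ : y₂ ∈ unitInterval) :
    |F.f x y₂ - F.f x y₁| ≤ C * |y₂ - y₁| ^ β := by
  rcases eq_or_ne y₁ y₂ with rfl | h
  · simp [Real.zero_rpow hβ.ne']
  · exact F.isFol.upper x hx y₁ h₁ y₂ h₂ h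

lemma Fol.lower' (hβ : 0 < β) (F : Fol C β) {x : ℝ} (hx : x ∈ unitInterval)
    {y₁ y₂ : ℝ} (h₁ : y₁ ∈ unitInterval) (h₂ : y₂ ∈ unitInterval) :
    C⁻¹ * |y₂ - y₁| ^ (1 / β) ≤ |F.f x y₂ - F.f x y₁| := by
  rcases eq_or_ne y₁ y₂ with rfl | h
  · simp [Real.zero_rpow (inv_ne_zero hβ.ne')]
  · exact F.isFol.lower x hx y₁ h₁ y₂ h₂ h

lemma Fol.contY (hβ : 0 < β) (F : Fol C β) {x : ℝ} (hx : x ∈ unitInterval) :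
    ContinuousOn (F.f x) unitInterval := by
  intro y hy
  rw [ContinuousWithinAt, tendsto_iff_dist_tendsto_zero]
  have hlim : Tendsto (fun z => C * |z - y| ^ β) (𝓝[unitInterval] y) (𝓝 0) := by
    have hc : Continuous fun z : ℝ => C * |z - y| ^ β := by
      refine continuous_const.mul (Continuous.rpow_const (by fun_prop) fun z => Or.inr hβ.le)
    have := (hc.tendsto y).mono_left (nhdsWithin_le_nhds (s := unitInterval))
    simpa [Real.zero_rpow hβ.ne'] using this
  refine squeeze_zero' (Eventually.of_forall fun _ => dist_nonneg) ?_ hlim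
  filter_upwards [self_mem_nhdsWithin] with z hz
  rw [Real.dist_eq]
  exact F.upper' hβ hx hy hz

lemma Fol.strictMono (hC : 0 < C) (hβ : 0 < β) (F : Fol C β) {x : ℝ} (hx : x ∈ unitInterval) :
    StrictMonoOn (F.f x) unitInterval := by
  refine ContinuousOn.strictMonoOn_of_injOn_Icc (zero_le_one) ?_ (F.contY hβ hx) ?_
  · rw [F.isFol.eq_bot x hx, F.isFol.eq_top x hx]; exact zero_le_one
  · intro y₁ h₁ y₂ h₂ he
    by_contra hne
    have := F.isFol.lower x hx y₁ h₁ y₂ h₂ hne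
    rw [he, sub_self, abs_zero] at this
    have h2 : 0 < |y₂ - y₁| := abs_pos.2 (sub_ne_zero.2 (Ne.symm hne))
    have : 0 < C⁻¹ * |y₂ - y₁| ^ (1 / β) := by positivity
    linarith

lemma Fol.surj (hβ : 0 < β) (F : Fol C β) {x : ℝ} (hx : x ∈ unitInterval) {z : ℝ}
    (hz : z ∈ unitInterval) : ∃ y ∈ unitInterval, F.f x y = z := by
  have := intermediate_value_Icc zero_le_one (F.contY hβ hx)
  rw [F.isFol.eq_bot x hx, F.isFol.eq_top x hx] at this
  exact this hz

lemma Fol.hinv_mem (hβ : 0 < β) (F : Fol C β) {x : ℝ} (hx : x ∈ unitInterval) {z : ℝ}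
    (hz : z ∈ unitInterval) : hinv F.f x z ∈ unitInterval :=
  Function.invFunOn_mem (F.surj hβ hx hz)

lemma Fol.hinv_eq (hβ : 0 < β) (F : Fol C β) {x : ℝ} (hx : x ∈ unitInterval) {z : ℝ}
    (hz : z ∈ unitInterval) : F.f x (hinv F.f x z) = z :=
  Function.invFunOn_eq (F.surj hβ hx hz)

lemma Fol.dist_le (hC : 0 < C) (hβ : 0 < β) (F : Fol C β) {x : ℝ} (hx : x ∈ unitInterval)
    {y₁ y₂ : ℝ} (h₁ : y₁ ∈ unitInterval) (h₂ : y₂ ∈ unitInterval) :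
    |y₂ - y₁| ≤ C ^ β * |F.f x y₂ - F.f x y₁| ^ β := by
  have h := F.lower' hβ hx h₁ h₂
  rw [inv_mul_le_iff₀ hC] at h
  have h2 := Real.rpow_le_rpow (by positivity) h hβ.le
  rw [← Real.rpow_mul (abs_nonneg _), one_div, inv_mul_cancel₀ hβ.ne', Real.rpow_one,
    Real.mul_rpow hC.le (abs_nonneg _)] at h2
  exact h2

lemma C0dist_le {u v : ℝ → ℝ → ℝ} {δ : ℝ} (hδ : 0 ≤ δ)
    (h : ∀ x ∈ unitInterval, ∀ y ∈ unitInterval, |u x y - v x y| ≤ δ) : C0dist u v ≤ δ := by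
  refine Real.sSup_le ?_ hδ
  rintro r ⟨x, hx, y, hy, rfl⟩
  exact h x hx y hy

lemma C0dist_nonneg (u v : ℝ → ℝ → ℝ) : 0 ≤ C0dist u v := by
  refine Real.sSup_nonneg ?_
  rintro r ⟨x, hx, y, hy, rfl⟩
  exact abs_nonneg _

lemma holDist_nonneg (α : ℝ) (u v : ℝ → ℝ) : 0 ≤ holDist α u v := by
  refine Real.sSup_nonneg ?_
  rintro r ⟨x, hx, y, hy, _, rfl⟩
  positivity

lemma abs_le_dalpha (α : ℝ) (F G : Fol C β) {x y : ℝ} (hx : x ∈ unitInterval)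
    (hy : y ∈ unitInterval) : |F.f x y - G.f x y| ≤ dalphaF α F G := by
  have h1 : |F.f x y - G.f x y| ≤ C0dist F.f G.f := by
    refine le_csSup ⟨1, ?_⟩ ⟨x, hx, y, hy, rfl⟩
    rintro r ⟨x, hx, y, hy, rfl⟩
    have a := F.isFol.mapsTo x hx y hy
    have b := G.isFol.mapsTo x hx y hy
    rw [abs_le]
    constructor
    · linarith [a.1, b.2]
    · linarith [a.2, b.1]
  have h2 := C0dist_nonneg F.fx G.fx
  have h3 : 0 ≤ sSup {r | ∃ x ∈ unitInterval,
      r = max (holDist α (F.f x) (G.f x)) (holDist α (hinv F.f x) (hinv G.f x))} := by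
    refine Real.sSup_nonneg ?_
    rintro r ⟨x, hx, rfl⟩
    exact le_max_of_le_left (holDist_nonneg _ _ _)
  unfold dalphaF dalpha
  linarith

/-- Interpolation between `C⁰` and `β`-Hölder. -/
lemma holDist_small {α β : ℝ} (hα : 0 ≤ α) (hαβ : α < β) {K : ℝ} (hK : 0 < K) {ε : ℝ}
    (hε : 0 < ε) :
    ∃ δ > 0, ∀ u v : ℝ → ℝ,
      (∀ y ∈ unitInterval, |u y - v y| ≤ δ) →
      (∀ y₁ ∈ unitInterval, ∀ y₂ ∈ unitInterval, |u y₂ - u y₁| ≤ K * |y₂ - y₁| ^ β) →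
      (∀ y₁ ∈ unitInterval, ∀ y₂ ∈ unitInterval, |v y₂ - v y₁| ≤ K * |y₂ - y₁| ^ β) →
      holDist α u v ≤ ε := by
  have hba : 0 < β - α := by linarith
  set r : ℝ := (ε / (2 * K)) ^ (1 / (β - α)) with hr
  have hr0 : 0 < r := by positivity
  have hrp : r ^ (β - α) = ε / (2 * K) := by
    rw [hr, ← Real.rpow_mul (by positivity), one_div, inv_mul_cancel₀ hba.ne', Real.rpow_one]
  refine ⟨ε * r ^ α / 2, by positivity, fun u v huv hu hv => Real.sSup_le ?_ hε.le⟩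
  rintro _ ⟨y₁, h₁, y₂, h₂, hne, rfl⟩
  have hd : 0 < |y₂ - y₁| := abs_pos.2 (sub_ne_zero.2 (Ne.symm hne))
  rw [div_le_iff₀ (by positivity)]
  rcases le_total |y₂ - y₁| r with h | h
  · have e1 : |y₂ - y₁| ^ β = |y₂ - y₁| ^ (β - α) * |y₂ - y₁| ^ α := by
      rw [← Real.rpow_add hd]; congr 1; ring
    have e2 : |y₂ - y₁| ^ (β - α) ≤ ε / (2 * K) := by
      rw [← hrp]; exact Real.rpow_le_rpow hd.le h hba.le
    have a1 := hu y₁ h₁ y₂ h₂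
    have a2 := hv y₁ h₁ y₂ h₂
    have a3 : |u y₂ - v y₂ - (u y₁ - v y₁)| ≤ |u y₂ - u y₁| + |v y₂ - v y₁| := by
      rw [show u y₂ - v y₂ - (u y₁ - v y₁) = (u y₂ - u y₁) - (v y₂ - v y₁) by ring]
      exact abs_sub _ _
    calc _ ≤ 2 * K * (|y₂ - y₁| ^ (β - α) * |y₂ - y₁| ^ α) := by rw [← e1]; linarith
      _ = (2 * K * |y₂ - y₁| ^ (β - α)) * |y₂ - y₁| ^ α := by ring
      _ ≤ ε * |y₂ - y₁| ^ α := by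
        gcongr
        rw [le_div_iff₀ (by positivity)] at e2
        linarith
  · have a3 : |u y₂ - v y₂ - (u y₁ - v y₁)| ≤ |u y₂ - v y₂| + |u y₁ - v y₁| := abs_sub _ _
    have a1 := huv y₁ h₁
    have a2 := huv y₂ h₂
    have a4 : r ^ α ≤ |y₂ - y₁| ^ α := Real.rpow_le_rpow hr0.le h hα
    have a5 := mul_le_mul_of_nonneg_left a4 hε.le
    linarith

/-- The topology of `d_α` is that of `C¹`-closeness. -/
lemma dalpha_small {α : ℝ} (hC : 0 < C) (hα : 0 ≤ α) (hαβ : α < β) {ε : ℝ} (hε : 0 < ε) :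
    ∃ δ > 0, ∀ F G : Fol C β,
      (∀ x ∈ unitInterval, ∀ y ∈ unitInterval, |F.f x y - G.f x y| ≤ δ) →
      (∀ x ∈ unitInterval, ∀ y ∈ unitInterval, |F.fx x y - G.fx x y| ≤ δ) →
      dalphaF α F G < ε := by
  have hβ : 0 < β := by linarith
  obtain ⟨δ₁, hδ₁, H₁⟩ := holDist_small hα hαβ hC (ε := ε / 4) (by positivity)
  obtain ⟨δ₂, hδ₂, H₂⟩ := holDist_small hα hαβ (K := C ^ β) (by positivity) (ε := ε / 4)
    (by positivity)
  set δ₃ : ℝ := (δ₂ / C ^ β) ^ (1 / β) with h3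
  have hδ₃ : 0 < δ₃ := by positivity
  have hp : C ^ β * δ₃ ^ β = δ₂ := by
    rw [h3, ← Real.rpow_mul (by positivity), one_div, inv_mul_cancel₀ hβ.ne', Real.rpow_one]
    field_simp
  refine ⟨min (ε / 4) (min δ₁ δ₃), by positivity, fun F G h h' => ?_⟩
  have b1 : C0dist F.f G.f ≤ ε / 4 := C0dist_le (by positivity) fun x hx y hy =>
    (h x hx y hy).trans (min_le_left _ _)
  have b2 : C0dist F.fx G.fx ≤ ε / 4 := C0dist_le (by positivity) fun x hx y hy =>
    (h' x hx y hy).trans (min_le_left _ _)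
  have b3 : sSup {r | ∃ x ∈ unitInterval,
      r = max (holDist α (F.f x) (G.f x)) (holDist α (hinv F.f x) (hinv G.f x))} ≤ ε / 4 := by
    refine Real.sSup_le ?_ (by positivity)
    rintro _ ⟨x, hx, rfl⟩
    have inv_hol : ∀ F : Fol C β, ∀ z₁ ∈ unitInterval, ∀ z₂ ∈ unitInterval,
        |hinv F.f x z₂ - hinv F.f x z₁| ≤ C ^ β * |z₂ - z₁| ^ β := by
      intro F z₁ hz₁ z₂ hz₂
      have := F.dist_le hC hβ hx (F.hinv_mem hβ hx hz₁) (F.hinv_mem hβ hx hz₂)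
      rwa [F.hinv_eq hβ hx hz₁, F.hinv_eq hβ hx hz₂] at this
    refine max_le (H₁ _ _ (fun y hy => ?_) (fun y₁ h₁ y₂ h₂ => F.upper' hβ hx h₁ h₂)
      (fun y₁ h₁ y₂ h₂ => G.upper' hβ hx h₁ h₂))
      (H₂ _ _ (fun z hz => ?_) (inv_hol F) (inv_hol G))
    · exact (h x hx y hy).trans ((min_le_right _ _).trans (min_le_left _ _))
    · have hm := G.hinv_mem hβ hx hz
      have := F.dist_le hC hβ hx hm (F.hinv_mem hβ hx hz)
      refine this.trans ?_
      rw [← hp]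
      gcongr
      rw [F.hinv_eq hβ hx hz, ← G.hinv_eq hβ hx hz, G.hinv_eq hβ hx hz, abs_sub_comm]
      have h5 := h x hx _ hm
      rw [G.hinv_eq hβ hx hz] at h5
      exact h5.trans ((min_le_right _ _).trans (min_le_right _ _))
  unfold dalphaF dalpha
  linarith

end FolBasics

/-! ### The open sets -/

/-- The robust smallness property. -/
def Uset (C β ρ : ℝ) : Set (Fol C β) :=
  {F | ∃ E : Set (ℝ × ℝ), MeasurableSet E ∧ ∃ δ > 0, muM Eᶜ ≤ ENNReal.ofReal ρ ∧
    ∀ y ∈ unitInterval,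
      volume {x | x ∈ unitInterval ∧ ∃ z, |z - F.f x y| ≤ δ ∧ (x, z) ∈ E} ≤ ENNReal.ofReal ρ}

lemma Uset_open (C β α ρ : ℝ) : IsOpenWrt (dalphaF α) (Uset C β ρ) := by
  rintro F ⟨E, hE, δ, hδ, h1, h2⟩
  refine ⟨δ / 2, by positivity, fun G hG => ⟨E, hE, δ / 2, by positivity, h1, fun y hy => ?_⟩⟩
  refine (measure_mono ?_).trans (h2 y hy)
  rintro x ⟨hx, z, hz, hxz⟩
  refine ⟨hx, z, ?_, hxz⟩
  have := (abs_le_dalpha α G F hx hy).trans hG.le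
  have h3 := abs_add_le (z - G.f x y) (G.f x y - F.f x y)
  rw [show z - G.f x y + (G.f x y - F.f x y) = z - F.f x y by ring] at h3
  linarith

lemma Uset_singular {C β : ℝ} (hβ : 0 < β) (F : Fol C β)
    (hF : ∀ n : ℕ, F ∈ Uset C β ((1 / 2) ^ n)) (ν : ℝ → Measure (ℝ × ℝ)) (hν : IsDisint F ν) :
    ∀ᵐ y ∂quotM F, (ν y).MutuallySingular (leafMeas F y) := by
  choose E hE δ hδ h1 h2 using hF
  set S : Set (ℝ × ℝ) := limsup (fun n => (E n)ᶜ) atTop with hS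
  have hSm : MeasurableSet S := MeasurableSet.measurableSet_limsup fun n => (hE n).compl
  have hS0 : muM S = 0 := by
    refine measure_limsup_atTop_eq_zero ?_
    refine ne_top_of_le_ne_top ?_ (ENNReal.tsum_le_tsum h1)
    rw [← ENNReal.ofReal_tsum_of_nonneg (fun n => by positivity) summable_geometric_two]
    exact ENNReal.ofReal_ne_top
  have hae : ∀ᵐ y ∂quotM F, ν y S = 0 := by
    have := hν.2.2.2 S hSm
    rw [hS0] at this
    exact (lintegral_eq_zero_iff (hν.2.1 S hSm)).1 this.symm
  have hI : ∀ᵐ y ∂quotM F, y ∈ unitInterval := by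
    by_cases hm : AEMeasurable (projF F.f) muM
    · unfold quotM
      refine (ae_map_iff hm (p := fun y => y ∈ unitInterval) measurableSet_Icc).2 ?_
      unfold muM
      have hM : MeasurableSet MSq := measurableSet_Icc.prod measurableSet_Icc
      filter_upwards [ae_restrict_mem hM] with p hp
      exact F.hinv_mem hβ hp.1 hp.2
    · unfold quotM
      rw [Measure.map_of_not_aemeasurable hm]
      simp
  filter_upwards [hae, hI] with y hy hyI
  refine ⟨S, hSm, hy, ?_⟩
  unfold leafMeas
  by_cases hm : AEMeasurable (fun x => (x, F.f x y)) (volume.restrict unitInterval)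
  swap
  · rw [Measure.map_of_not_aemeasurable hm]; simp
  rw [Measure.map_apply_of_aemeasurable hm hSm.compl,
    Measure.restrict_apply' measurableSet_Icc]
  have hsub : (fun x => (x, F.f x y)) ⁻¹' Sᶜ ∩ unitInterval ⊆
      ⋃ n : ℕ, ⋂ k : ℕ, {x | x ∈ unitInterval ∧ ∃ z, |z - F.f x y| ≤ δ (n + k) ∧
        (x, z) ∈ E (n + k)} := by
    rintro x ⟨hx, hxI⟩
    rw [mem_preimage, mem_compl_iff, hS, mem_limsup_iff_frequently_mem, not_frequently,
      eventually_atTop] at hx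
    obtain ⟨n, hn⟩ := hx
    refine mem_iUnion.2 ⟨n, mem_iInter.2 fun k => ⟨hxI, F.f x y, ?_, ?_⟩⟩
    · simpa using (hδ _).le
    · simpa using hn (n + k) (by omega)
  refine measure_mono_null hsub (measure_iUnion_null fun n => ?_)
  refine le_antisymm (ge_of_tendsto' (x := atTop)
    (f := fun k : ℕ => ENNReal.ofReal ((1 / 2) ^ (n + k))) ?_ fun k => ?_) zero_le
  · have : Tendsto (fun k : ℕ => ((1 : ℝ) / 2) ^ (n + k)) atTop (𝓝 0) := by
      have h := (tendsto_pow_atTop_nhds_zero_of_lt_one (r := (1 : ℝ) / 2)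
        (by norm_num) (by norm_num)).comp (tendsto_add_atTop_nat n)
      refine h.congr fun k => ?_
      simp [add_comm]
    simpa using ENNReal.tendsto_ofReal this
  · exact (measure_mono (iInter_subset _ k)).trans (h2 (n + k) y hyI)

lemma quotM_ne_zero {C β : ℝ} (F : Fol C β) (ν : ℝ → Measure (ℝ × ℝ)) (hν : IsDisint F ν) :
    quotM F ≠ 0 := by
  intro h0
  have := hν.2.2.2 univ MeasurableSet.univ
  rw [h0, lintegral_zero_measure] at this
  unfold muM MSq at this
  rw [Measure.restrict_apply_univ, Measure.volume_eq_prod, Measure.prod_prod] at this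
  simp [unitInterval] at this

/-! ### First approximation: bi-Lipschitz foliations -/

lemma isFol_of {C β : ℝ} (hC : 0 < C) {f fx : ℝ → ℝ → ℝ}
    (hasDeriv : ∀ y ∈ unitInterval, ∀ x ∈ unitInterval,
      HasDerivWithinAt (fun x' => f x' y) (fx x y) unitInterval x)
    (derivCont : ContinuousOn (fun p : ℝ × ℝ => fx p.1 p.2) MSq)
    (eq_id : ∀ y ∈ unitInterval, f 0 y = y)
    (eq_bot : ∀ x ∈ unitInterval, f x 0 = 0)
    (eq_top : ∀ x ∈ unitInterval, f x 1 = 1)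
    (hb : ∀ x ∈ unitInterval, ∀ y₁ ∈ unitInterval, ∀ y₂ ∈ unitInterval, y₁ ≤ y₂ →
      C⁻¹ * (y₂ - y₁) ^ (1 / β) ≤ f x y₂ - f x y₁ ∧ f x y₂ - f x y₁ ≤ C * (y₂ - y₁) ^ β) :
    IsFol C β f fx := by
  have hmono : ∀ x ∈ unitInterval, ∀ y₁ ∈ unitInterval, ∀ y₂ ∈ unitInterval, y₁ ≤ y₂ →
      f x y₁ ≤ f x y₂ := by
    intro x hx y₁ h₁ y₂ h₂ h
    have h3 := (hb x hx y₁ h₁ y₂ h₂ h).1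
    have h4 : 0 ≤ y₂ - y₁ := by linarith
    have : 0 ≤ C⁻¹ * (y₂ - y₁) ^ (1 / β) := by positivity
    linarith
  have m0 : (0 : ℝ) ∈ unitInterval := ⟨le_rfl, zero_le_one⟩
  have m1 : (1 : ℝ) ∈ unitInterval := ⟨zero_le_one, le_rfl⟩
  refine ⟨fun x hx y hy => ⟨?_, ?_⟩, hasDeriv, derivCont, eq_id, eq_bot, eq_top, ?_, ?_⟩
  · rw [← eq_bot x hx]; exact hmono x hx 0 m0 y hy hy.1
  · rw [← eq_top x hx]; exact hmono x hx y hy 1 m1 hy.2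
  · intro x hx y₁ h₁ y₂ h₂ _
    rcases le_total y₁ y₂ with h | h
    · rw [abs_of_nonneg (sub_nonneg.2 h), abs_of_nonneg (sub_nonneg.2 (hmono x hx _ h₁ _ h₂ h))]
      exact (hb x hx y₁ h₁ y₂ h₂ h).1
    · rw [abs_sub_comm, abs_sub_comm (f x y₂), abs_of_nonneg (sub_nonneg.2 h),
        abs_of_nonneg (sub_nonneg.2 (hmono x hx _ h₂ _ h₁ h))]
      exact (hb x hx y₂ h₂ y₁ h₁ h).1
  · intro x hx y₁ h₁ y₂ h₂ _
    rcases le_total y₁ y₂ with h | h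
    · rw [abs_of_nonneg (sub_nonneg.2 h), abs_of_nonneg (sub_nonneg.2 (hmono x hx _ h₁ _ h₂ h))]
      exact (hb x hx y₁ h₁ y₂ h₂ h).2
    · rw [abs_sub_comm, abs_sub_comm y₂, abs_of_nonneg (sub_nonneg.2 h),
        abs_of_nonneg (sub_nonneg.2 (hmono x hx _ h₂ _ h₁ h))]
      exact (hb x hx y₂ h₂ y₁ h₁ h).2

lemma LL_deriv {ψ : ℝ → ℝ → ℝ} {ψx : ℝ → ℝ} {N : ℕ} {a : ℝ → ℕ → ℝ} {ax : ℕ → ℝ} {s : Set ℝ}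
    {x : ℝ} (ha : ∀ j ≤ N, HasDerivWithinAt (fun x => a x j) (ax j) s x)
    (hψ : ∀ t, HasDerivWithinAt (fun x => ψ x t) (ψx t) s x) (y : ℝ) :
    HasDerivWithinAt (fun x => LL (ψ x) N (a x) y)
      (LL (ψ x) N ax y + ∑ j ∈ Finset.range N, (a x (j + 1) - a x j) * ψx ((N : ℝ) * y - j)) s x := by
  unfold LL
  rw [add_assoc, ← Finset.sum_add_distrib]
  refine (ha 0 (Nat.zero_le _)).add (HasDerivWithinAt.fun_sum fun j hj => ?_)
  have hj' := Finset.mem_range.1 hj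
  exact ((ha (j + 1) hj').sub (ha j hj'.le)).mul (hψ _)

lemma node_mem {N j : ℕ} (hN : 0 < N) (hj : j ≤ N) : (j : ℝ) / N ∈ unitInterval := by
  have hN' : (0 : ℝ) < N := by exact_mod_cast hN
  exact ⟨by positivity, by rw [div_le_one hN']; exact_mod_cast hj⟩

lemma contOn_slice {u : ℝ → ℝ → ℝ} (hu : ContinuousOn (fun p : ℝ × ℝ => u p.1 p.2) MSq) {c : ℝ}
    (hc : c ∈ unitInterval) : ContinuousOn (fun p : ℝ × ℝ => u p.1 c) MSq := by
  have : ContinuousOn (fun p : ℝ × ℝ => (p.1, c)) MSq := by fun_prop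
  exact hu.comp this fun p hp => ⟨hp.1, hc⟩

/-- Uniform continuity in `y`. -/
lemma unif_y {u : ℝ → ℝ → ℝ} (hu : ContinuousOn (fun p : ℝ × ℝ => u p.1 p.2) MSq) {ε : ℝ}
    (hε : 0 < ε) : ∃ N₀ : ℕ, ∀ N ≥ N₀, ∀ x ∈ unitInterval, ∀ y ∈ unitInterval,
      ∀ y' ∈ unitInterval, |y - y'| ≤ 1 / (N : ℝ) → |u x y - u x y'| ≤ ε := by
  have hc : IsCompact MSq := isCompact_Icc.prod isCompact_Icc
  have huc := hc.uniformContinuousOn_of_continuous hu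
  rw [Metric.uniformContinuousOn_iff] at huc
  obtain ⟨δ, hδ, H⟩ := huc ε hε
  obtain ⟨N₀, hN₀⟩ := exists_nat_gt (1 / δ)
  refine ⟨N₀, fun N hN x hx y hy y' hy' h => ?_⟩
  have hN1 : 1 / δ < N := hN₀.trans_le (by exact_mod_cast hN)
  have hN0 : (0 : ℝ) < N := lt_trans (by positivity) hN1
  have := H (x, y) ⟨hx, hy⟩ (x, y') ⟨hx, hy'⟩ (by
    rw [dist_prod_same_left, Real.dist_eq]
    refine h.trans_lt ?_
    rw [one_div_lt hN0 hδ]; exact hN1)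
  rw [Real.dist_eq] at this
  exact this.le

lemma Fol.contX {C β : ℝ} (F : Fol C β) {y : ℝ} (hy : y ∈ unitInterval) :
    ContinuousOn (fun x => F.f x y) unitInterval := fun x hx =>
  (F.isFol.hasDeriv y hy x hx).continuousWithinAt

lemma hol_unif {β : ℝ} (hβ : 0 < β) (C : ℝ) {ε : ℝ} (hε : 0 < ε) :
    ∃ N₀ : ℕ, ∀ N ≥ N₀, 0 < N → C * (1 / (N : ℝ)) ^ β ≤ ε := by
  have h1 : Tendsto (fun N : ℕ => C * (1 / (N : ℝ)) ^ β) atTop (𝓝 0) := by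
    have := (tendsto_one_div_atTop_nhds_zero_nat (𝕜 := ℝ)).rpow_const (p := β) (Or.inr hβ.le)
    rw [Real.zero_rpow hβ.ne'] at this
    simpa using this.const_mul C
  obtain ⟨N₀, hN₀⟩ := eventually_atTop.1 (h1.eventually (ge_mem_nhds hε))
  exact ⟨N₀, fun N hN _ => hN₀ N hN⟩

lemma step1 {C β : ℝ} (hC : 1 < C) (hβ : 0 < β) (hβ1 : β < 1) (F : Fol C β) {ε : ℝ} (hε : 0 < ε) :
    ∃ G : Fol C β,
      (∀ x ∈ unitInterval, ∀ y ∈ unitInterval, |G.f x y - F.f x y| ≤ ε) ∧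
      (∀ x ∈ unitInterval, ∀ y ∈ unitInterval, |G.fx x y - F.fx x y| ≤ ε) ∧
      ∃ cu cl l L : ℝ, cu < C ∧ C⁻¹ < cl ∧ 0 < l ∧ 0 < L ∧
        ∀ x ∈ unitInterval, ∀ y₁ ∈ unitInterval, ∀ y₂ ∈ unitInterval, y₁ ≤ y₂ →
          cl * (y₂ - y₁) ^ (1 / β) ≤ G.f x y₂ - G.f x y₁ ∧
          G.f x y₂ - G.f x y₁ ≤ cu * (y₂ - y₁) ^ β ∧
          l * (y₂ - y₁) ≤ G.f x y₂ - G.f x y₁ ∧ G.f x y₂ - G.f x y₁ ≤ L * (y₂ - y₁) := by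
  have hC0 : 0 < C := by linarith
  have hM : IsCompact MSq := isCompact_Icc.prod isCompact_Icc
  obtain ⟨B, hB⟩ := hM.exists_bound_of_continuousOn F.isFol.derivCont
  have hB0 : 0 ≤ B := (norm_nonneg _).trans (hB (0, 0) ⟨⟨le_rfl, zero_le_one⟩, ⟨le_rfl, zero_le_one⟩⟩)
  obtain ⟨N₁, hN₁⟩ := unif_y F.isFol.derivCont (half_pos hε)
  obtain ⟨N₂, hN₂⟩ := hol_unif hβ C (half_pos hε)
  set N := N₁ + N₂ + 1 with hNdef
  have hN : 0 < N := by omega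
  have hN' : (0 : ℝ) < N := by exact_mod_cast hN
  obtain ⟨c, hc0, hc1, hcε, hcB⟩ : ∃ c : ℝ, 0 < c ∧ c < 1 ∧ c ≤ ε / 2 ∧ c * B ≤ ε / 2 := by
    refine ⟨min (1 / 2) (min (ε / 2) (ε / 2 / (B + 1))), by positivity,
      (min_le_left _ _).trans_lt (by norm_num), (min_le_right _ _).trans (min_le_left _ _), ?_⟩
    have : min (1 / 2) (min (ε / 2) (ε / 2 / (B + 1))) ≤ ε / 2 / (B + 1) :=
      (min_le_right _ _).trans (min_le_right _ _)
    rw [le_div_iff₀ (by positivity)] at this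
    have h0 : 0 ≤ min (1 / 2) (min (ε / 2) (ε / 2 / (B + 1))) := by positivity
    nlinarith
  have z0 : ∀ t ≤ (0 : ℝ), cl t = 0 := fun t ht => cl_of_nonpos ht
  have z1 : ∀ t, (1 : ℝ) ≤ t → cl t = 1 := fun t ht => cl_of_one_le ht
  set lin : ℝ → ℝ → ℝ := fun x y => LL cl N (fun i => F.f x ((i : ℝ) / N)) y with hlin
  set linx : ℝ → ℝ → ℝ := fun x y => LL cl N (fun i => F.fx x ((i : ℝ) / N)) y with hlinx
  -- bounds on node increments
  have hnode : ∀ x ∈ unitInterval, ∀ p q : ℕ, p ≤ q → q ≤ N →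
      C⁻¹ * (((q : ℝ) - p) / N) ^ (1 / β) ≤ F.f x ((q : ℝ) / N) - F.f x ((p : ℝ) / N) ∧
      F.f x ((q : ℝ) / N) - F.f x ((p : ℝ) / N) ≤ C * (((q : ℝ) - p) / N) ^ β := by
    intro x hx p q hpq hq
    have mp := node_mem hN (hpq.trans hq)
    have mq := node_mem hN hq
    have hpq' : (p : ℝ) / N ≤ (q : ℝ) / N := by gcongr
    have h1 := F.lower' hβ hx mp mq
    have h2 := F.upper' hβ hx mp mq
    have hmono := (F.strictMono hC0 hβ hx).monotoneOn mp mq hpq'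
    rw [abs_of_nonneg (sub_nonneg.2 hpq'), abs_of_nonneg (sub_nonneg.2 hmono), ← sub_div] at h1 h2
    exact ⟨h1, h2⟩
  have hlow : ∀ x ∈ unitInterval, ∀ y₁ ∈ unitInterval, ∀ y₂ ∈ unitInterval, y₁ ≤ y₂ →
      C⁻¹ * (y₂ - y₁) ^ (1 / β) ≤ lin x y₂ - lin x y₁ := by
    intro x hx y₁ h₁ y₂ h₂ h
    have hcv : ConvexOn ℝ (Ici 0) fun t : ℝ => C⁻¹ * t ^ (1 / β) :=
      (convexOn_rpow (p := 1 / β) (by rw [le_div_iff₀ hβ]; linarith)).smul (by positivity)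
    exact LL_convex hcv hN (fun p q hpq hq => (hnode x hx p q hpq hq).1) h₁ h₂ h
  have hup : ∀ x ∈ unitInterval, ∀ y₁ ∈ unitInterval, ∀ y₂ ∈ unitInterval, y₁ ≤ y₂ →
      lin x y₂ - lin x y₁ ≤ C * (y₂ - y₁) ^ β := by
    intro x hx y₁ h₁ y₂ h₂ h
    have hcv : ConvexOn ℝ (Ici 0) fun t : ℝ => -(C * t ^ β) :=
      ((Real.concaveOn_rpow hβ.le hβ1.le).smul hC0.le).neg
    have := LL_convex hcv hN (a := fun i => -(F.f x ((i : ℝ) / N)))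
      (fun p q hpq hq => by linarith [(hnode x hx p q hpq hq).2]) h₁ h₂ h
    have e : ∀ y, LL cl N (fun i => -(F.f x ((i : ℝ) / N))) y = - lin x y := by
      intro y
      simp only [hlin, LL]
      rw [neg_add, ← Finset.sum_neg_distrib]
      congr 1
      exact Finset.sum_congr rfl fun j _ => by ring
    rw [e, e] at this
    linarith
  have hlip : ∀ x ∈ unitInterval, ∀ y₁ ∈ unitInterval, ∀ y₂ ∈ unitInterval, y₁ ≤ y₂ →
      lin x y₂ - lin x y₁ ≤ N * (y₂ - y₁) := by
    intro x hx y₁ h₁ y₂ h₂ h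
    have := (LL_lip (ψ := cl) (l := 1) (L := 1) (fun t₁ t₂ _ => by simp) zero_le_one hN
      (a := fun i => F.f x ((i : ℝ) / N)) (m := 0) (M := N) le_rfl (fun j hj => by
        have mj := node_mem hN hj.le
        have mj' := node_mem hN (Nat.succ_le_of_lt hj)
        have hjj : (j : ℝ) / N ≤ ((j + 1 : ℕ) : ℝ) / N := by gcongr; omega
        have hmono := (F.strictMono hC0 hβ hx).monotoneOn mj mj' hjj
        have a1 := (F.isFol.mapsTo x hx _ mj).1
        have a2 := (F.isFol.mapsTo x hx _ mj').2
        rw [zero_div, div_self hN'.ne']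
        exact ⟨by linarith, by linarith⟩) h₁ h₂ h).2
    rw [one_mul] at this
    exact this
  have hclose : ∀ x ∈ unitInterval, ∀ y ∈ unitInterval, |lin x y - F.f x y| ≤ ε / 2 := by
    intro x hx y hy
    refine LL_close hN (fun y hy y' hy' hyy => ?_) hy
    rw [abs_sub_comm]
    refine (F.upper' hβ hx hy hy').trans (le_trans ?_ (hN₂ N (by omega) hN))
    rw [abs_sub_comm]
    gcongr
  have hclosex : ∀ x ∈ unitInterval, ∀ y ∈ unitInterval, |linx x y - F.fx x y| ≤ ε / 2 := by
    intro x hx y hy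
    exact LL_close hN (fun y hy y' hy' hyy => hN₁ N (by omega) x hx y hy y' hy' hyy) hy
  have hlin0 : ∀ x ∈ unitInterval, lin x 0 = 0 := by
    intro x hx
    simp only [hlin]
    rw [LL_zero z0, Nat.cast_zero, zero_div, F.isFol.eq_bot x hx]
  have hlin1 : ∀ x ∈ unitInterval, lin x 1 = 1 := by
    intro x hx
    simp only [hlin]
    rw [LL_one z1, div_self hN'.ne', F.isFol.eq_top x hx]
  have m0 : (0 : ℝ) ∈ unitInterval := ⟨le_rfl, zero_le_one⟩
  have m1 : (1 : ℝ) ∈ unitInterval := ⟨zero_le_one, le_rfl⟩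
  have hlinid : ∀ y ∈ unitInterval, lin 0 y = y := by
    intro y hy
    simp only [hlin]
    have hi := idx_lt hN y
    rw [LL_cl_eq hi _ (idx_le hy) (le_idx hN hy), F.isFol.eq_id _ (node_mem hN hi.le),
      F.isFol.eq_id _ (node_mem hN (Nat.succ_le_of_lt hi))]
    push_cast
    field_simp
    ring
  have hbounds : ∀ x ∈ unitInterval, ∀ y₁ ∈ unitInterval, ∀ y₂ ∈ unitInterval, y₁ ≤ y₂ →
      ((1 - c) * C⁻¹ + c) * (y₂ - y₁) ^ (1 / β) ≤
        ((1 - c) * lin x y₂ + c * y₂) - ((1 - c) * lin x y₁ + c * y₁) ∧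
      ((1 - c) * lin x y₂ + c * y₂) - ((1 - c) * lin x y₁ + c * y₁) ≤
        ((1 - c) * C + c) * (y₂ - y₁) ^ β ∧
      c * (y₂ - y₁) ≤ ((1 - c) * lin x y₂ + c * y₂) - ((1 - c) * lin x y₁ + c * y₁) ∧
      ((1 - c) * lin x y₂ + c * y₂) - ((1 - c) * lin x y₁ + c * y₁) ≤ (N + 1) * (y₂ - y₁) := by
    intro x hx y₁ h₁ y₂ h₂ h
    have hd0 : 0 ≤ y₂ - y₁ := by linarith
    have hd1 : y₂ - y₁ ≤ 1 := by linarith [h₁.1, h₂.2]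
    have p1 : (y₂ - y₁) ^ (1 / β) ≤ y₂ - y₁ := by
      conv_rhs => rw [← Real.rpow_one (y₂ - y₁)]
      exact Real.rpow_le_rpow_of_exponent_ge_of_imp hd0 hd1 (by rw [le_div_iff₀ hβ]; linarith)
        (by intro _ h; exact absurd h (one_div_ne_zero hβ.ne'))
    have p2 : y₂ - y₁ ≤ (y₂ - y₁) ^ β := by
      conv_lhs => rw [← Real.rpow_one (y₂ - y₁)]
      exact Real.rpow_le_rpow_of_exponent_ge_of_imp hd0 hd1 hβ1.le
        (by intro _ h; exact absurd h one_ne_zero)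
    have q1 := mul_le_mul_of_nonneg_left (hlow x hx y₁ h₁ y₂ h₂ h) (sub_nonneg.2 hc1.le)
    have q2 := mul_le_mul_of_nonneg_left (hup x hx y₁ h₁ y₂ h₂ h) (sub_nonneg.2 hc1.le)
    have q3 := mul_le_mul_of_nonneg_left (hlip x hx y₁ h₁ y₂ h₂ h) (sub_nonneg.2 hc1.le)
    have q4 := mul_le_mul_of_nonneg_left p1 hc0.le
    have q5 := mul_le_mul_of_nonneg_left p2 hc0.le
    have q6 : 0 ≤ C⁻¹ * (y₂ - y₁) ^ (1 / β) := by positivity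
    have q7 : 0 ≤ (N : ℝ) * (y₂ - y₁) := by positivity
    have q8 := mul_nonneg (sub_nonneg.2 hc1.le) q6
    have q9 := mul_nonneg hc0.le q7
    have q10 : c * (y₂ - y₁) ≤ 1 * (y₂ - y₁) := by gcongr
    refine ⟨by linarith, by linarith, by linarith, by linarith⟩
  have hCinv : C⁻¹ < 1 := inv_lt_one_of_one_lt₀ hC
  have hcu : (1 - c) * C + c < C := by nlinarith
  have hcl : C⁻¹ < (1 - c) * C⁻¹ + c := by nlinarith
  have hfol : IsFol C β (fun x y => (1 - c) * lin x y + c * y) (fun x y => (1 - c) * linx x y) := by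
    refine isFol_of hC0 ?_ ?_ ?_ ?_ ?_ ?_
    · intro y hy x hx
      have := LL_deriv (ψ := fun _ => cl) (ψx := fun _ => 0) (N := N)
        (a := fun x i => F.f x ((i : ℝ) / N)) (ax := fun i => F.fx x ((i : ℝ) / N))
        (s := unitInterval) (x := x)
        (fun j hj => F.isFol.hasDeriv _ (node_mem hN hj) x hx)
        (fun t => hasDerivWithinAt_const _ _ _) y
      simp only [mul_zero, Finset.sum_const_zero, add_zero] at this
      exact (this.const_mul (1 - c)).add_const (c * y)
    · refine continuousOn_const.mul ?_
      simp only [hlinx, LL]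
      refine (contOn_slice F.isFol.derivCont (node_mem hN (Nat.zero_le _))).add
        (continuousOn_finsetSum _ fun j hj => ?_)
      have hj' := Finset.mem_range.1 hj
      refine ((contOn_slice F.isFol.derivCont (node_mem hN hj')).sub
        (contOn_slice F.isFol.derivCont (node_mem hN hj'.le))).mul ?_
      have := cl_cont
      fun_prop
    · intro y hy
      simp only [hlinid y hy]; ring
    · intro x hx
      simp only [hlin0 x hx]; ring
    · intro x hx
      simp only [hlin1 x hx]; ring
    · intro x hx y₁ h₁ y₂ h₂ h
      obtain ⟨b1, b2, -, -⟩ := hbounds x hx y₁ h₁ y₂ h₂ h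
      have hd0 : 0 ≤ y₂ - y₁ := by linarith
      refine ⟨le_trans ?_ b1, b2.trans ?_⟩
      · gcongr
      · gcongr
  refine ⟨⟨_, _, hfol⟩, ?_, ?_, (1 - c) * C + c, (1 - c) * C⁻¹ + c, c, N + 1, hcu, hcl, hc0,
    by positivity, hbounds⟩
  · intro x hx y hy
    have h1 := hclose x hx y hy
    have h2 : lin x y ∈ unitInterval := by
      have a := hlow x hx 0 m0 y hy hy.1
      have b := hlow x hx y hy 1 m1 hy.2
      rw [hlin0 x hx] at a
      rw [hlin1 x hx] at b
      have hy0 : 0 ≤ y - 0 := by linarith [hy.1]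
      have hy1 : 0 ≤ 1 - y := by linarith [hy.2]
      have a' : 0 ≤ C⁻¹ * (y - 0) ^ (1 / β) := by positivity
      have b' : 0 ≤ C⁻¹ * (1 - y) ^ (1 / β) := by positivity
      exact ⟨by linarith, by linarith⟩
    show |(1 - c) * lin x y + c * y - F.f x y| ≤ ε
    have h3 : |c * (y - lin x y)| ≤ ε / 2 := by
      rw [abs_mul, abs_of_pos hc0]
      have : |y - lin x y| ≤ 1 := by
        rw [abs_le]; exact ⟨by linarith [hy.1, h2.2], by linarith [hy.2, h2.1]⟩
      nlinarith
    have h4 := abs_add_le (lin x y - F.f x y) (c * (y - lin x y))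
    rw [show lin x y - F.f x y + c * (y - lin x y) = (1 - c) * lin x y + c * y - F.f x y by ring]
      at h4
    linarith
  · intro x hx y hy
    have h1 := hclosex x hx y hy
    have h2 := hB (x, y) ⟨hx, hy⟩
    rw [Real.norm_eq_abs] at h2
    show |(1 - c) * linx x y - F.fx x y| ≤ ε
    have h4 := abs_sub ((1 - c) * (linx x y - F.fx x y)) (c * F.fx x y)
    rw [show (1 - c) * (linx x y - F.fx x y) - c * F.fx x y = (1 - c) * linx x y - F.fx x y by ring,
      abs_mul, abs_mul, abs_of_pos hc0, abs_of_pos (sub_pos.2 hc1)] at h4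
    simp only at h2
    have h5 := mul_le_mul_of_nonneg_left h2 hc0.le
    have h6 := mul_nonneg hc0.le (abs_nonneg (linx x y - F.fx x y))
    linarith

/-! ### The redistribution profile -/

lemma profile {K : ℕ} (hK : 0 < K) {η : ℝ} (hη : 0 < η) (hη1 : η < 1) :
    ∃ θ θ' : ℕ → ℝ → ℝ, (∀ q x, HasDerivAt (θ q) (θ' q x) x) ∧ (∀ q, Continuous (θ' q)) ∧
      (∀ x, ∑ q ∈ Finset.range K, θ q x = 1) ∧ (∀ q x, η / K ≤ θ q x) ∧
      (∀ q, θ q 0 = 1 / K) ∧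
      (∀ q < K, ∀ x, η / 2 ≤ K * x - q → K * x - q ≤ 1 - η / 2 → 1 - η ≤ θ q x) := by
  have hK' : (0 : ℝ) < K := by exact_mod_cast hK
  let b : ContDiffBump (1 / 2 : ℝ) :=
    { rIn := 1 / 2 - η / 2, rOut := 1 / 2, rIn_pos := by linarith, rIn_lt_rOut := by linarith }
  let u : ℕ → ℝ → ℝ := fun q x => b (K * x - q)
  have hu0 : ∀ q x, 0 ≤ u q x := fun q x => b.nonneg
  have hu1 : ∀ q x, u q x ≤ 1 := fun q x => b.le_one
  have hune : ∀ q x, u q x ≠ 0 → 0 < K * x - q ∧ K * x - q < 1 := by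
    intro q x h
    have : (K * x - q : ℝ) ∈ Function.support b := h
    rw [b.support_eq, Metric.mem_ball, Real.dist_eq, abs_lt] at this
    have h1 : b.rOut = 1 / 2 := rfl
    rw [h1] at this
    constructor <;> linarith [this.1, this.2]
  have hS : ∀ x, ∑ p ∈ Finset.range K, u p x ≤ 1 := by
    intro x
    by_cases h : ∃ p ∈ Finset.range K, u p x ≠ 0
    · obtain ⟨p, hp, hpx⟩ := h
      rw [Finset.sum_eq_single_of_mem p hp]
      · exact hu1 p x
      · intro q _ hqp
        by_contra hq
        have h1 := hune p x hpx
        have h2 := hune q x hq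
        apply hqp
        have h3 : (q : ℝ) < p + 1 := by linarith [h1.2, h2.1]
        have h4 : (p : ℝ) < q + 1 := by linarith [h1.1, h2.2]
        have h3' : q < p + 1 := by exact_mod_cast h3
        have h4' : p < q + 1 := by exact_mod_cast h4
        omega
    · push Not at h
      rw [Finset.sum_eq_zero h]; exact zero_le_one
  have hS0 : ∀ x, 0 ≤ ∑ p ∈ Finset.range K, u p x := fun x => Finset.sum_nonneg fun p _ => hu0 p x
  let θ : ℕ → ℝ → ℝ := fun q x =>
    (1 - η) * u q x + (1 - (1 - η) * ∑ p ∈ Finset.range K, u p x) / K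
  have hucd : ∀ q, ContDiff ℝ 1 (u q) := by
    intro q
    have hb : ContDiff ℝ 1 (b : ℝ → ℝ) := b.contDiff
    exact hb.comp (by fun_prop)
  have hcd : ∀ q, ContDiff ℝ 1 (θ q) := by
    intro q
    have h1 : ContDiff ℝ 1 fun x => ∑ p ∈ Finset.range K, u p x :=
      ContDiff.sum fun p _ => hucd p
    exact (contDiff_const.mul (hucd q)).add ((contDiff_const.sub (contDiff_const.mul h1)).div_const _)
  refine ⟨θ, fun q => deriv (θ q), fun q x => ?_, fun q => ?_, fun x => ?_, fun q x => ?_,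
    fun q => ?_, fun q hq x h1 h2 => ?_⟩
  · exact (((hcd q).differentiable one_ne_zero) x).hasDerivAt
  · exact (hcd q).continuous_deriv le_rfl
  · simp only [θ]
    rw [Finset.sum_add_distrib, ← Finset.mul_sum, Finset.sum_const, Finset.card_range, nsmul_eq_mul]
    field_simp
    ring
  · simp only [θ]
    have h1 : 0 ≤ (1 - η) * u q x := mul_nonneg (by linarith) (hu0 q x)
    have h2 : η / K ≤ (1 - (1 - η) * ∑ p ∈ Finset.range K, u p x) / K := by
      gcongr
      nlinarith [hS x, hS0 x]
    linarith
  · have h0 : ∀ p, u p 0 = 0 := by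
      intro p
      by_contra h
      have := (hune p 0 h).1
      have hp : (0 : ℝ) ≤ p := Nat.cast_nonneg _
      rw [mul_zero] at this
      linarith
    simp only [θ, h0]
    simp
  · have : u q x = 1 := by
      refine b.one_of_mem_closedBall ?_
      rw [Metric.mem_closedBall, Real.dist_eq, abs_le]
      have h1 : b.rIn = 1 / 2 - η / 2 := rfl
      rw [h1]
      constructor <;> linarith
    simp only [θ]
    rw [this]
    have h2 : 0 ≤ (1 - (1 - η) * ∑ p ∈ Finset.range K, u p x) / K := by
      apply div_nonneg _ hK'.le
      nlinarith [hS x, hS0 x]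
    linarith

/-- The profile function. -/
def psi (K : ℕ) (w : ℕ → ℝ) (t : ℝ) : ℝ := ∑ q ∈ Finset.range K, w q * cl ((K : ℝ) * t - q)

lemma psi_zero (K : ℕ) (w : ℕ → ℝ) {t : ℝ} (ht : t ≤ 0) : psi K w t = 0 := by
  unfold psi
  refine Finset.sum_eq_zero fun q _ => ?_
  rw [cl_of_nonpos, mul_zero]
  have h1 := mul_nonpos_of_nonneg_of_nonpos (Nat.cast_nonneg (α := ℝ) K) ht
  have h2 : (0 : ℝ) ≤ q := Nat.cast_nonneg _
  linarith

lemma psi_ge (K : ℕ) (w : ℕ → ℝ) {t : ℝ} (ht : 1 ≤ t) :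
    psi K w t = ∑ q ∈ Finset.range K, w q := by
  unfold psi
  refine Finset.sum_congr rfl fun q hq => ?_
  have hq' : (q : ℝ) + 1 ≤ K := by exact_mod_cast Finset.mem_range.1 hq
  rw [cl_of_one_le, mul_one]
  have h0 : (0 : ℝ) ≤ q := Nat.cast_nonneg _
  nlinarith

lemma psi_lip {K : ℕ} (hK : 0 < K) {w : ℕ → ℝ} {l L : ℝ}
    (hw : ∀ q < K, l / K ≤ w q ∧ w q ≤ L / K) {t₁ t₂ : ℝ} (h : t₁ ≤ t₂) :
    l * (cl t₂ - cl t₁) ≤ psi K w t₂ - psi K w t₁ ∧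
      psi K w t₂ - psi K w t₁ ≤ L * (cl t₂ - cl t₁) := by
  have hK' : (0 : ℝ) < K := by exact_mod_cast hK
  have e : psi K w t₂ - psi K w t₁ = ∑ q ∈ Finset.range K,
      w q * (cl ((K : ℝ) * t₂ - q) - cl ((K : ℝ) * t₁ - q)) := by
    unfold psi
    rw [← Finset.sum_sub_distrib]
    exact Finset.sum_congr rfl fun j _ => by ring
  have key : ∀ c : ℝ, c * (cl t₂ - cl t₁) = ∑ q ∈ Finset.range K,
      (c / K) * (cl ((K : ℝ) * t₂ - q) - cl ((K : ℝ) * t₁ - q)) := by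
    intro c
    rw [← Finset.mul_sum, Finset.sum_sub_distrib, sum_cl' hK, sum_cl' hK]
    field_simp
  have hcl : ∀ q : ℕ, 0 ≤ cl ((K : ℝ) * t₂ - q) - cl ((K : ℝ) * t₁ - q) := fun q =>
    sub_nonneg.2 (cl_mono (by have := mul_le_mul_of_nonneg_left h hK'.le; linarith))
  rw [e, key, key]
  exact ⟨Finset.sum_le_sum fun q hq =>
      mul_le_mul_of_nonneg_right (hw q (Finset.mem_range.1 hq)).1 (hcl q),
    Finset.sum_le_sum fun q hq =>
      mul_le_mul_of_nonneg_right (hw q (Finset.mem_range.1 hq)).2 (hcl q)⟩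

lemma psi_const {K : ℕ} (hK : 0 < K) {w : ℕ → ℝ} (hw : ∀ q < K, w q = 1 / K) (t : ℝ) :
    psi K w t = cl t := by
  have hK' : (0 : ℝ) < K := by exact_mod_cast hK
  unfold psi
  rw [Finset.sum_congr rfl fun q hq => by rw [hw q (Finset.mem_range.1 hq)], ← Finset.mul_sum,
    sum_cl' hK]
  field_simp

lemma psi_node {K : ℕ} (hK : 0 < K) (w : ℕ → ℝ) {q : ℕ} (hq : q < K) :
    psi K w (((q : ℝ) + 1) / K) - psi K w ((q : ℝ) / K) = w q := by
  have hK' : (0 : ℝ) < K := by exact_mod_cast hK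
  unfold psi
  rw [← Finset.sum_sub_distrib, Finset.sum_eq_single_of_mem q (Finset.mem_range.2 hq)]
  · rw [mul_div_cancel₀ _ hK'.ne', mul_div_cancel₀ _ hK'.ne', cl_of_one_le (by linarith),
      cl_of_nonpos (by linarith)]
    ring
  · intro p _ hp
    rw [mul_div_cancel₀ _ hK'.ne', mul_div_cancel₀ _ hK'.ne']
    rcases lt_or_gt_of_ne hp with h | h
    · have : (p : ℝ) + 1 ≤ q := by exact_mod_cast h
      rw [cl_of_one_le (by linarith), cl_of_one_le (by linarith)]; ring
    · have : (q : ℝ) + 1 ≤ p := by exact_mod_cast h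
      rw [cl_of_nonpos (by linarith), cl_of_nonpos (by linarith)]; ring

/-! ### Second approximation -/

lemma rpow_small {p A : ℝ} (hp : 0 < p) (hA : 0 < A) :
    ∃ r > 0, ∀ t, 0 ≤ t → t ≤ r → t ^ p ≤ A := by
  refine ⟨A ^ (1 / p), by positivity, fun t ht htr => ?_⟩
  have := Real.rpow_le_rpow ht htr hp.le
  rwa [← Real.rpow_mul hA.le, one_div, inv_mul_cancel₀ hp.ne', Real.rpow_one] at this

/-- A `C⁰`-small bi-Lipschitz perturbation stays in the Hölder class. -/
lemma holder_pert {C β : ℝ} (hC : 0 < C) (hβ : 0 < β) (hβ1 : β < 1) {cu c₀ l L : ℝ}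
    (hcu : cu < C) (hc₀ : C⁻¹ < c₀) (hl : 0 < l) (hL : 0 < L) :
    ∃ s > 0, ∀ g h : ℝ → ℝ,
      (∀ y ∈ unitInterval, |h y - g y| ≤ s) →
      (∀ y₁ ∈ unitInterval, ∀ y₂ ∈ unitInterval, y₁ ≤ y₂ →
        c₀ * (y₂ - y₁) ^ (1 / β) ≤ g y₂ - g y₁ ∧ g y₂ - g y₁ ≤ cu * (y₂ - y₁) ^ β) →
      (∀ y₁ ∈ unitInterval, ∀ y₂ ∈ unitInterval, y₁ ≤ y₂ →
        l * (y₂ - y₁) ≤ h y₂ - h y₁ ∧ h y₂ - h y₁ ≤ L * (y₂ - y₁)) →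
      ∀ y₁ ∈ unitInterval, ∀ y₂ ∈ unitInterval, y₁ ≤ y₂ →
        C⁻¹ * (y₂ - y₁) ^ (1 / β) ≤ h y₂ - h y₁ ∧ h y₂ - h y₁ ≤ C * (y₂ - y₁) ^ β := by
  have hb1 : 0 < 1 / β - 1 := by
    rw [sub_pos, lt_div_iff₀ hβ]; linarith
  obtain ⟨r₁, hr₁, H₁⟩ := rpow_small (p := 1 - β) (A := C / L) (by linarith) (by positivity)
  obtain ⟨r₂, hr₂, H₂⟩ := rpow_small (p := 1 / β - 1) (A := C * l) hb1 (by positivity)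
  set r := min r₁ r₂ with hr
  have hr0 : 0 < r := by positivity
  have hd1 : 0 < C - cu := by linarith
  have hd2 : 0 < c₀ - C⁻¹ := by linarith
  refine ⟨min ((C - cu) * r ^ β / 2) ((c₀ - C⁻¹) * r ^ (1 / β) / 2), by positivity,
    fun g h hgh hg hh y₁ h₁ y₂ h₂ h12 => ?_⟩
  obtain ⟨g1, g2⟩ := hg y₁ h₁ y₂ h₂ h12
  obtain ⟨k1, k2⟩ := hh y₁ h₁ y₂ h₂ h12
  have e1 := abs_le.1 (hgh y₁ h₁)
  have e2 := abs_le.1 (hgh y₂ h₂)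
  have s1 := min_le_left ((C - cu) * r ^ β / 2) ((c₀ - C⁻¹) * r ^ (1 / β) / 2)
  have s2 := min_le_right ((C - cu) * r ^ β / 2) ((c₀ - C⁻¹) * r ^ (1 / β) / 2)
  rcases eq_or_lt_of_le h12 with rfl | hlt
  · simp only [sub_self]
    rw [Real.zero_rpow hβ.ne', Real.zero_rpow (one_div_ne_zero hβ.ne')]
    simp
  have hd : 0 < y₂ - y₁ := sub_pos.2 hlt
  generalize min ((C - cu) * r ^ β / 2) ((c₀ - C⁻¹) * r ^ (1 / β) / 2) = s at *
  generalize y₂ - y₁ = d at *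
  rcases le_total d r with hdr | hdr
  · have a1 := H₁ d hd.le (hdr.trans (min_le_left _ _))
    have a2 := H₂ d hd.le (hdr.trans (min_le_right _ _))
    have p1 : d ^ (1 - β) * d ^ β = d := by
      rw [← Real.rpow_add hd]; simp
    have p2 : d ^ (1 / β - 1) * d = d ^ (1 / β) := by
      conv_lhs => rw [← Real.rpow_one d, ← Real.rpow_mul hd.le, one_mul, ← Real.rpow_add hd]
      congr 1; ring
    constructor
    · refine le_trans ?_ k1
      rw [← p2, inv_mul_le_iff₀ hC, ← mul_assoc]
      gcongr
    · refine k2.trans ?_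
      rw [le_div_iff₀ hL] at a1
      have : 0 ≤ d ^ β := by positivity
      calc L * d = (d ^ (1 - β) * L) * d ^ β := by rw [mul_right_comm, p1]; ring
        _ ≤ _ := by gcongr
  · have q1 : r ^ β ≤ d ^ β := Real.rpow_le_rpow hr0.le hdr hβ.le
    have q2 : r ^ (1 / β) ≤ d ^ (1 / β) := Real.rpow_le_rpow hr0.le hdr (by positivity)
    have q3 := mul_le_mul_of_nonneg_left q1 hd1.le
    have q4 := mul_le_mul_of_nonneg_left q2 hd2.le
    constructor
    · linarith [e1.1, e1.2, e2.1, e2.2]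
    · linarith [e1.1, e1.2, e2.1, e2.2]

lemma step2 {C β : ℝ} (hC : 1 < C) (hβ : 0 < β) (hβ1 : β < 1) (F : Fol C β)
    {cu c₀ l L : ℝ} (hcu : cu < C) (hc₀ : C⁻¹ < c₀) (hl : 0 < l) (hL : 0 < L)
    (hF : ∀ x ∈ unitInterval, ∀ y₁ ∈ unitInterval, ∀ y₂ ∈ unitInterval, y₁ ≤ y₂ →
          c₀ * (y₂ - y₁) ^ (1 / β) ≤ F.f x y₂ - F.f x y₁ ∧
          F.f x y₂ - F.f x y₁ ≤ cu * (y₂ - y₁) ^ β ∧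
          l * (y₂ - y₁) ≤ F.f x y₂ - F.f x y₁ ∧ F.f x y₂ - F.f x y₁ ≤ L * (y₂ - y₁))
    {ε : ℝ} (hε : 0 < ε) {K : ℕ} (hK : 0 < K) {η : ℝ} (hη : 0 < η) (hη1 : η < 1) :
    ∃ G : Fol C β, ∃ N : ℕ, 0 < N ∧
      (∀ x ∈ unitInterval, ∀ y ∈ unitInterval, |G.f x y - F.f x y| ≤ ε) ∧
      (∀ x ∈ unitInterval, ∀ y ∈ unitInterval, |G.fx x y - F.fx x y| ≤ ε) ∧
      ∀ x ∈ unitInterval, ∀ i < N, ∀ q < K, η / 2 ≤ K * x - q → K * x - q ≤ 1 - η / 2 →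
        (1 - η) * (G.f x (((i : ℝ) + 1) / N) - G.f x ((i : ℝ) / N)) ≤
          G.f x (((i : ℝ) + ((q : ℝ) + 1) / K) / N) - G.f x (((i : ℝ) + (q : ℝ) / K) / N) := by
  have hC0 : 0 < C := by linarith
  have hK' : (0 : ℝ) < K := by exact_mod_cast hK
  obtain ⟨θ, θ', hθd, hθc, hθs, hθl, hθ0, hθcore⟩ := profile hK hη hη1
  have hθu : ∀ x, ∀ q < K, θ q x ≤ 1 := by
    intro x q hq
    rw [← hθs x]
    exact Finset.single_le_sum (f := fun q => θ q x)
      (fun p _ => (show 0 ≤ η / K by positivity).trans (hθl p x)) (Finset.mem_range.2 hq)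
  have hθ's : ∀ x, ∑ q ∈ Finset.range K, θ' q x = 0 := by
    intro x
    have h1 : HasDerivAt (fun x => ∑ q ∈ Finset.range K, θ q x) (∑ q ∈ Finset.range K, θ' q x) x :=
      HasDerivAt.fun_sum fun q _ => hθd q x
    have h2 : HasDerivAt (fun x => ∑ q ∈ Finset.range K, θ q x) 0 x := by
      simp only [hθs]; exact hasDerivAt_const _ _
    exact h1.unique h2
  set ψ : ℝ → ℝ → ℝ := fun x t => psi K (fun q => θ q x) t with hψ
  set ψx : ℝ → ℝ → ℝ := fun x t => psi K (fun q => θ' q x) t with hψx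
  have z0 : ∀ x, ∀ t ≤ (0 : ℝ), ψ x t = 0 := fun x t ht => psi_zero _ _ ht
  have z1 : ∀ x, ∀ t, (1 : ℝ) ≤ t → ψ x t = 1 := fun x t ht => (psi_ge _ _ ht).trans (hθs x)
  have zx0 : ∀ x, ∀ t ≤ (0 : ℝ), ψx x t = 0 := fun x t ht => psi_zero _ _ ht
  have zx1 : ∀ x, ∀ t, (1 : ℝ) ≤ t → ψx x t = 0 := fun x t ht => (psi_ge _ _ ht).trans (hθ's x)
  have hψlip : ∀ x t₁ t₂, t₁ ≤ t₂ → η * (cl t₂ - cl t₁) ≤ ψ x t₂ - ψ x t₁ ∧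
      ψ x t₂ - ψ x t₁ ≤ K * (cl t₂ - cl t₁) := fun x t₁ t₂ h =>
    psi_lip hK (fun q hq => ⟨hθl q x, by rw [div_self hK'.ne']; exact hθu x q hq⟩) h
  have hψmono : ∀ x, Monotone (ψ x) := by
    intro x t₁ t₂ h
    have h1 := (hψlip x t₁ t₂ h).1
    have h2 := mul_nonneg hη.le (sub_nonneg.2 (cl_mono h))
    linarith
  have hψ01 : ∀ x t, ψ x t ∈ unitInterval := by
    intro x t
    constructor
    · rw [← z0 x (min t 0) (min_le_right _ _)]; exact hψmono x (min_le_left _ _)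
    · rw [← z1 x (max t 1) (le_max_right _ _)]; exact hψmono x (le_max_left _ _)
  have hψd : ∀ x t, HasDerivAt (fun x => ψ x t) (ψx x t) x := by
    intro x t
    simp only [hψ, hψx, psi]
    exact HasDerivAt.fun_sum fun q _ => (hθd q x).mul_const _
  have hψc : Continuous fun p : ℝ × ℝ => ψ p.1 p.2 := by
    simp only [hψ, psi]
    have h1 := cl_cont
    have h2 : ∀ q, Continuous (θ q) := fun q =>
      continuous_iff_continuousAt.2 fun x => (hθd q x).continuousAt
    fun_prop
  have hψxc : Continuous fun p : ℝ × ℝ => ψx p.1 p.2 := by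
    simp only [hψx, psi]
    have h1 := cl_cont
    fun_prop
  have hM : IsCompact MSq := isCompact_Icc.prod isCompact_Icc
  obtain ⟨B, hB⟩ := hM.exists_bound_of_continuousOn hψxc.continuousOn
  have hB0 : 0 ≤ B := (norm_nonneg _).trans (hB (0, 0) ⟨⟨le_rfl, zero_le_one⟩, ⟨le_rfl, zero_le_one⟩⟩)
  obtain ⟨s, hs, Hs⟩ := holder_pert hC0 hβ hβ1 (l := η * l) (L := K * L) hcu hc₀ (by positivity)
    (by positivity)
  obtain ⟨N₁, hN₁⟩ := unif_y F.isFol.derivCont (half_pos hε)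
  obtain ⟨N₂, hN₂⟩ := exists_nat_gt (L / s + L / ε + L * B / (ε / 2))
  set N := N₁ + N₂ + 1 with hNdef
  have hN : 0 < N := by omega
  have hN' : (0 : ℝ) < N := by exact_mod_cast hN
  have hN2' : L / s + L / ε + L * B / (ε / 2) ≤ N := by
    refine hN₂.le.trans ?_
    exact_mod_cast (show N₂ ≤ N by omega)
  have t1 : 0 ≤ L / s := by positivity
  have t2 : 0 ≤ L / ε := by positivity
  have t3 : 0 ≤ L * B / (ε / 2) := by positivity
  have hNs : L / N ≤ s := by
    rw [div_le_iff₀ hN', mul_comm, ← div_le_iff₀ hs]; linarith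
  have hNε : L / N ≤ ε := by
    rw [div_le_iff₀ hN', mul_comm, ← div_le_iff₀ hε]; linarith
  have hNB : L / N * B ≤ ε / 2 := by
    rw [div_mul_eq_mul_div, div_le_iff₀ hN', mul_comm (ε / 2), ← div_le_iff₀ (half_pos hε)]
    linarith
  set a : ℝ → ℕ → ℝ := fun x i => F.f x ((i : ℝ) / N) with ha
  set ax : ℝ → ℕ → ℝ := fun x i => F.fx x ((i : ℝ) / N) with hax
  set g : ℝ → ℝ → ℝ := fun x y => LL (ψ x) N (a x) y with hg
  set gx : ℝ → ℝ → ℝ := fun x y => LL (ψ x) N (ax x) y +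
    ∑ j ∈ Finset.range N, (a x (j + 1) - a x j) * ψx x ((N : ℝ) * y - j) with hgx
  have hinc : ∀ x ∈ unitInterval, ∀ j < N, l / N ≤ a x (j + 1) - a x j ∧
      a x (j + 1) - a x j ≤ L / N := by
    intro x hx j hj
    have hjj : (j : ℝ) / N ≤ ((j + 1 : ℕ) : ℝ) / N := by gcongr; omega
    obtain ⟨-, -, h1, h2⟩ := hF x hx _ (node_mem hN hj.le) _ (node_mem hN (Nat.succ_le_of_lt hj)) hjj
    have e : ((j + 1 : ℕ) : ℝ) / N - (j : ℝ) / N = 1 / N := by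
      rw [← sub_div]; push_cast; ring
    rw [e, mul_one_div] at h1 h2
    exact ⟨h1, h2⟩
  have hgF : ∀ x ∈ unitInterval, ∀ y ∈ unitInterval, |g x y - F.f x y| ≤ L / N := by
    intro x hx y hy
    refine LL_close_gen (z0 x) (z1 x) (hψ01 x) hN (u := F.f x) ?_ hy
    intro y hy y' hy' hyy
    have hmo := (F.strictMono hC0 hβ hx).monotoneOn
    rcases le_total y y' with h | h
    · have := (hF x hx y hy y' hy' h).2.2.2
      rw [abs_sub_comm, abs_of_nonneg (sub_nonneg.2 (hmo hy hy' h))]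
      rw [abs_sub_comm, abs_of_nonneg (sub_nonneg.2 h)] at hyy
      refine this.trans ?_
      rw [← mul_one_div L]
      gcongr
    · have := (hF x hx y' hy' y hy h).2.2.2
      rw [abs_of_nonneg (sub_nonneg.2 (hmo hy' hy h))]
      rw [abs_of_nonneg (sub_nonneg.2 h)] at hyy
      refine this.trans ?_
      rw [← mul_one_div L]
      gcongr
  have hgxF : ∀ x ∈ unitInterval, ∀ y ∈ unitInterval, |gx x y - F.fx x y| ≤ ε := by
    intro x hx y hy
    have h1 : |LL (ψ x) N (ax x) y - F.fx x y| ≤ ε / 2 :=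
      LL_close_gen (z0 x) (z1 x) (hψ01 x) hN (u := F.fx x)
        (fun y hy y' hy' hyy => hN₁ N (by omega) x hx y hy y' hy' hyy) hy
    have h2 : |∑ j ∈ Finset.range N, (a x (j + 1) - a x j) * ψx x ((N : ℝ) * y - j)| ≤ ε / 2 := by
      have hi := idx_lt hN y
      have hi1 := idx_le (N := N) hy
      have hi2 := le_idx hN hy
      rw [Finset.sum_eq_single_of_mem _ (Finset.mem_range.2 hi)]
      · have hw := hinc x hx _ hi
        have hb := hB (x, (N : ℝ) * y - idx N y) ⟨hx, by linarith, by linarith⟩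
        rw [Real.norm_eq_abs] at hb
        rw [abs_mul, abs_of_nonneg ((show 0 ≤ l / N by positivity).trans hw.1)]
        exact (mul_le_mul hw.2 hb (abs_nonneg _) (by positivity)).trans hNB
      · intro j _ hj
        rcases lt_or_gt_of_ne hj with h | h
        · have : (j : ℝ) + 1 ≤ idx N y := by exact_mod_cast h
          rw [zx1 _ _ (by linarith), mul_zero]
        · have : (idx N y : ℝ) + 1 ≤ j := by exact_mod_cast h
          rw [zx0 _ _ (by linarith), mul_zero]
    have h3 := abs_add_le (LL (ψ x) N (ax x) y - F.fx x y)
      (∑ j ∈ Finset.range N, (a x (j + 1) - a x j) * ψx x ((N : ℝ) * y - j))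
    have h4 : gx x y - F.fx x y = (LL (ψ x) N (ax x) y - F.fx x y) +
      (∑ j ∈ Finset.range N, (a x (j + 1) - a x j) * ψx x ((N : ℝ) * y - j)) := by
      simp only [hgx]; ring
    rw [h4]
    linarith
  have hfslice : ∀ j ≤ N, ContinuousOn (fun p : ℝ × ℝ => a p.1 j) MSq := fun j hj =>
    (F.contX (node_mem hN hj)).comp continuousOn_fst fun p hp => hp.1
  have hfxslice : ∀ j ≤ N, ContinuousOn (fun p : ℝ × ℝ => ax p.1 j) MSq := fun j hj =>
    contOn_slice F.isFol.derivCont (node_mem hN hj)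
  have hfol : IsFol C β g gx := by
    refine isFol_of hC0 ?_ ?_ ?_ ?_ ?_ ?_
    · intro y hy x hx
      exact LL_deriv (fun j hj => F.isFol.hasDeriv _ (node_mem hN hj) x hx)
        (fun t => (hψd x t).hasDerivWithinAt) y
    · simp only [hgx, LL]
      have c1 : ∀ j : ℕ, ContinuousOn (fun p : ℝ × ℝ => ψ p.1 ((N : ℝ) * p.2 - j)) MSq := fun j =>
        (hψc.comp (by fun_prop : Continuous fun p : ℝ × ℝ => (p.1, (N : ℝ) * p.2 - j))).continuousOn
      have c2 : ∀ j : ℕ, ContinuousOn (fun p : ℝ × ℝ => ψx p.1 ((N : ℝ) * p.2 - j)) MSq := fun j =>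
        (hψxc.comp (by fun_prop : Continuous fun p : ℝ × ℝ => (p.1, (N : ℝ) * p.2 - j))).continuousOn
      refine ((hfxslice 0 (Nat.zero_le _)).add (continuousOn_finsetSum _ fun j hj => ?_)).add
        (continuousOn_finsetSum _ fun j hj => ?_)
      · have hj' := Finset.mem_range.1 hj
        exact ((hfxslice _ hj').sub (hfxslice _ hj'.le)).mul (c1 j)
      · have hj' := Finset.mem_range.1 hj
        exact ((hfslice _ hj').sub (hfslice _ hj'.le)).mul (c2 j)
    · intro y hy
      have m0 : (0 : ℝ) ∈ unitInterval := ⟨le_rfl, zero_le_one⟩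
      have hi := idx_lt hN y
      have hi1 := idx_le (N := N) hy
      have hi2 := le_idx hN hy
      have e : ψ 0 (N * y - idx N y) = N * y - idx N y := by
        simp only [hψ]
        rw [psi_const hK (fun q _ => hθ0 q), cl_of_mem (by linarith) (by linarith)]
      simp only [hg]
      rw [LL_eq (z0 0) (z1 0) hi _ hi1 hi2, e]
      simp only [ha]
      rw [F.isFol.eq_id _ (node_mem hN hi.le), F.isFol.eq_id _ (node_mem hN (Nat.succ_le_of_lt hi))]
      push_cast
      field_simp
      ring
    · intro x hx
      simp only [hg]
      rw [LL_zero (z0 x)]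
      simp only [ha]
      rw [Nat.cast_zero, zero_div, F.isFol.eq_bot x hx]
    · intro x hx
      simp only [hg]
      rw [LL_one (z1 x)]
      simp only [ha]
      rw [div_self hN'.ne', F.isFol.eq_top x hx]
    · intro x hx
      refine Hs (F.f x) (g x) (fun y hy => (hgF x hx y hy).trans hNs) ?_ ?_
      · intro y₁ h₁ y₂ h₂ h
        obtain ⟨p1, p2, -, -⟩ := hF x hx y₁ h₁ y₂ h₂ h
        exact ⟨p1, p2⟩
      · intro y₁ h₁ y₂ h₂ h
        exact LL_lip (hψlip x) hη.le hN hl.le (hinc x hx) h₁ h₂ h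
  refine ⟨⟨g, gx, hfol⟩, N, hN, fun x hx y hy => (hgF x hx y hy).trans hNε, hgxF, ?_⟩
  intro x hx i hi q hq hq1 hq2
  show (1 - η) * (g x (((i : ℝ) + 1) / N) - g x ((i : ℝ) / N)) ≤
          g x (((i : ℝ) + ((q : ℝ) + 1) / K) / N) - g x (((i : ℝ) + (q : ℝ) / K) / N)
  have hval : ∀ t : ℝ, 0 ≤ t → t ≤ 1 →
      g x (((i : ℝ) + t) / N) = a x i + (a x (i + 1) - a x i) * ψ x t := by
    intro t ht0 ht1
    have e : (N : ℝ) * (((i : ℝ) + t) / N) = i + t := by field_simp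
    simp only [hg]
    rw [LL_eq (z0 x) (z1 x) hi _ (by rw [e]; linarith) (by rw [e]; linarith), e]
    congr 2
    ring_nf
  have hq' : (q : ℝ) + 1 ≤ K := by exact_mod_cast hq
  have hq0 : (0 : ℝ) ≤ q := Nat.cast_nonneg _
  have v0 := hval 0 le_rfl zero_le_one
  have v1 := hval 1 zero_le_one le_rfl
  have v2 := hval ((q : ℝ) / K) (by positivity) (by rw [div_le_one hK']; linarith)
  have v3 := hval (((q : ℝ) + 1) / K) (by positivity) (by rw [div_le_one hK']; linarith)
  rw [add_zero, z0 x 0 le_rfl] at v0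
  rw [z1 x 1 le_rfl] at v1
  rw [v0, v1, v2, v3]
  have hn : ψ x (((q : ℝ) + 1) / K) - ψ x ((q : ℝ) / K) = θ q x := psi_node hK _ hq
  have hc := hθcore q hq x hq1 hq2
  have hw := (show 0 ≤ l / N by positivity).trans (hinc x hx i hi).1
  have := mul_le_mul_of_nonneg_left hc hw
  rw [← hn] at this
  linarith

/-! ### Membership in the open set -/

lemma Uset_mem {C β : ℝ} (hC : 0 < C) (hβ : 0 < β) (F : Fol C β) {N K : ℕ} (hN : 0 < N)
    (hK : 0 < K) {η ρ : ℝ} (hη : 0 < η) (hη1 : η < 1) (hρ : 3 * η ≤ ρ) (hKρ : 1 / (K : ℝ) ≤ ρ)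
    (H : ∀ x ∈ unitInterval, ∀ i < N, ∀ q < K, η / 2 ≤ K * x - q → K * x - q ≤ 1 - η / 2 →
        (1 - η) * (F.f x (((i : ℝ) + 1) / N) - F.f x ((i : ℝ) / N)) ≤
          F.f x (((i : ℝ) + ((q : ℝ) + 1) / K) / N) - F.f x (((i : ℝ) + (q : ℝ) / K) / N)) :
    F ∈ Uset C β ρ := by
  have hN' : (0 : ℝ) < N := by exact_mod_cast hN
  have hK' : (0 : ℝ) < K := by exact_mod_cast hK
  set δ : ℝ := η / (2 * N) with hδ
  have hδ0 : 0 < δ := by positivity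
  -- node membership
  have hmem : ∀ i < N, ∀ t : ℝ, 0 ≤ t → t ≤ 1 → ((i : ℝ) + t) / N ∈ unitInterval := by
    intro i hi t h0 h1
    have : (i : ℝ) + 1 ≤ N := by exact_mod_cast hi
    have hi0 : (0 : ℝ) ≤ i := Nat.cast_nonneg _
    exact ⟨by positivity, by rw [div_le_one hN']; linarith⟩
  have hq01 : ∀ q < K, (0 : ℝ) ≤ (q : ℝ) / K ∧ (q : ℝ) / K ≤ 1 ∧ (0 : ℝ) ≤ ((q : ℝ) + 1) / K ∧
      ((q : ℝ) + 1) / K ≤ 1 ∧ (q : ℝ) / K ≤ ((q : ℝ) + 1) / K := by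
    intro q hq
    have h1 : (q : ℝ) + 1 ≤ K := by exact_mod_cast hq
    refine ⟨by positivity, by rw [div_le_one hK']; linarith, by positivity,
      by rw [div_le_one hK']; linarith, by gcongr; linarith⟩
  set v : ℝ → ℕ → ℝ → ℝ := fun x i t => F.f (cl x) (((i : ℝ) + t) / N) with hv
  have hvc : ∀ i < N, ∀ t : ℝ, 0 ≤ t → t ≤ 1 → Continuous fun x => v x i t := by
    intro i hi t h0 h1
    exact (F.contX (hmem i hi t h0 h1)).comp_continuous cl_cont fun x => cl_mem x
  have hvI : ∀ x ∈ unitInterval, ∀ i t, v x i t = F.f x (((i : ℝ) + t) / N) := by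
    intro x hx i t
    simp only [hv]; rw [cl_of_mem hx.1 hx.2]
  set E : Set (ℝ × ℝ) := ⋃ i ∈ Finset.range N, ⋃ q ∈ Finset.range K,
    {p : ℝ × ℝ | (q : ℝ) ≤ K * p.1 ∧ K * p.1 ≤ q + 1 ∧ v p.1 i ((q : ℝ) / K) + δ < p.2 ∧
      p.2 < v p.1 i (((q : ℝ) + 1) / K) - δ} with hE
  have hEm : MeasurableSet E := by
    refine Finset.measurableSet_biUnion _ fun i hi => Finset.measurableSet_biUnion _ fun q hq => ?_
    obtain ⟨a1, a2, a3, a4, -⟩ := hq01 q (Finset.mem_range.1 hq)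
    have c1 := (hvc i (Finset.mem_range.1 hi) _ a1 a2).comp (continuous_fst (X := ℝ) (Y := ℝ))
    have c2 := (hvc i (Finset.mem_range.1 hi) _ a3 a4).comp (continuous_fst (X := ℝ) (Y := ℝ))
    have m1 : MeasurableSet {p : ℝ × ℝ | (q : ℝ) ≤ K * p.1} :=
      measurableSet_le measurable_const (by fun_prop)
    have m2 : MeasurableSet {p : ℝ × ℝ | K * p.1 ≤ (q : ℝ) + 1} :=
      measurableSet_le (by fun_prop) measurable_const
    have m3 : MeasurableSet {p : ℝ × ℝ | v p.1 i ((q : ℝ) / K) + δ < p.2} :=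
      measurableSet_lt (c1.measurable.add_const δ) measurable_snd
    have m4 : MeasurableSet {p : ℝ × ℝ | p.2 < v p.1 i (((q : ℝ) + 1) / K) - δ} :=
      measurableSet_lt measurable_snd (c2.measurable.sub_const δ)
    exact m1.inter (m2.inter (m3.inter m4))
  have hEmem : ∀ x z, (x, z) ∈ E ↔ ∃ i < N, ∃ q < K, (q : ℝ) ≤ K * x ∧ K * x ≤ q + 1 ∧
      v x i ((q : ℝ) / K) + δ < z ∧ z < v x i (((q : ℝ) + 1) / K) - δ := by
    intro x z
    simp only [hE, mem_iUnion, Finset.mem_range, mem_setOf_eq, exists_prop]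
  refine ⟨E, hEm, δ, hδ0, ?_, ?_⟩
  · -- area of the complement
    have hmu : muM = (volume.restrict unitInterval).prod (volume.restrict unitInterval) := by
      unfold muM MSq
      rw [Measure.volume_eq_prod, Measure.prod_restrict]
    rw [hmu, Measure.prod_apply hEm.compl]
    set D : Set ℝ := ⋃ q ∈ Finset.range K,
      (Icc ((q : ℝ) / K) (((q : ℝ) + η / 2) / K) ∪
        Icc (((q : ℝ) + 1 - η / 2) / K) (((q : ℝ) + 1) / K)) with hD
    have hDm : MeasurableSet D :=
      Finset.measurableSet_biUnion _ fun q _ => measurableSet_Icc.union measurableSet_Icc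
    have hDvol : volume D ≤ ENNReal.ofReal η := by
      calc volume D ≤ ∑ q ∈ Finset.range K, volume (Icc ((q : ℝ) / K) (((q : ℝ) + η / 2) / K) ∪
            Icc (((q : ℝ) + 1 - η / 2) / K) (((q : ℝ) + 1) / K)) := measure_biUnion_finset_le _ _
        _ ≤ ∑ q ∈ Finset.range K, ENNReal.ofReal (η / K) := by
          refine Finset.sum_le_sum fun q _ => (measure_union_le _ _).trans ?_
          rw [Real.volume_Icc, Real.volume_Icc, ← sub_div, ← sub_div, add_sub_cancel_left,
            sub_sub_cancel, ← ENNReal.ofReal_add (by positivity) (by positivity)]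
          apply ENNReal.ofReal_le_ofReal
          rw [← add_div, add_halves]
        _ = ENNReal.ofReal η := by
          rw [← ENNReal.ofReal_sum_of_nonneg fun q _ => by positivity]
          congr 1
          rw [Finset.sum_const, Finset.card_range, nsmul_eq_mul]
          field_simp
    have hfib : ∀ x ∈ unitInterval, (volume.restrict unitInterval) (Prod.mk x ⁻¹' Eᶜ) ≤
        D.indicator 1 x + ENNReal.ofReal (2 * η) := by
      intro x hx
      by_cases hxD : x ∈ D
      · rw [indicator_of_mem hxD]
        refine le_trans ?_ le_self_add
        refine (measure_mono (subset_univ _)).trans ?_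
        rw [Measure.restrict_apply_univ]
        simp [unitInterval]
      · rw [indicator_of_notMem hxD, zero_add]
        set q := idx K x with hq
        have hqK : q < K := idx_lt hK x
        have hq1 : (q : ℝ) ≤ K * x := idx_le hx
        have hq2 : K * x ≤ (q : ℝ) + 1 := le_idx hK hx
        have hcore : η / 2 ≤ K * x - q ∧ K * x - q ≤ 1 - η / 2 := by
          constructor
          · by_contra hcon
            apply hxD
            simp only [hD, mem_iUnion, Finset.mem_range]
            refine ⟨q, hqK, Or.inl ⟨?_, ?_⟩⟩
            · rw [div_le_iff₀ hK']; linarith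
            · rw [le_div_iff₀ hK']; linarith
          · by_contra hcon
            apply hxD
            simp only [hD, mem_iUnion, Finset.mem_range]
            refine ⟨q, hqK, Or.inr ⟨?_, ?_⟩⟩
            · rw [div_le_iff₀ hK']; linarith
            · rw [le_div_iff₀ hK']; linarith
        obtain ⟨a1, a2, a3, a4, a5⟩ := hq01 q hqK
        have hmo := (F.strictMono hC hβ hx).monotoneOn
        rw [Measure.restrict_apply' measurableSet_Icc]
        have hsub : Prod.mk x ⁻¹' Eᶜ ∩ unitInterval ⊆ ⋃ i ∈ Finset.range N,
            (Icc (F.f x ((i : ℝ) / N)) (F.f x (((i : ℝ) + (q : ℝ) / K) / N) + δ) ∪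
             Icc (F.f x (((i : ℝ) + ((q : ℝ) + 1) / K) / N) - δ) (F.f x (((i : ℝ) + 1) / N))) := by
          rintro z ⟨hz, hzI⟩
          obtain ⟨y, hy, rfl⟩ := F.surj hβ hx hzI
          have hi := idx_lt hN y
          have hi1 := idx_le (N := N) hy
          have hi2 := le_idx hN hy
          simp only [mem_iUnion, Finset.mem_range]
          refine ⟨idx N y, hi, ?_⟩
          generalize idx N y = i at *
          by_contra hcon
          apply hz
          rw [hEmem]
          refine ⟨i, hi, q, hqK, hq1, hq2, ?_⟩
          rw [hvI x hx, hvI x hx]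
          have k1 : F.f x ((i : ℝ) / N) ≤ F.f x y := by
            refine hmo (node_mem hN hi.le) hy ?_
            rw [div_le_iff₀ hN']; linarith
          have k2 : F.f x y ≤ F.f x (((i : ℝ) + 1) / N) := by
            refine hmo hy (hmem i hi 1 zero_le_one le_rfl) ?_
            rw [le_div_iff₀ hN']; linarith
          rw [mem_union, not_or, mem_Icc, mem_Icc, not_and, not_and'] at hcon
          exact ⟨not_le.1 (hcon.1 k1), not_le.1 (hcon.2 k2)⟩
        refine (measure_mono hsub).trans ((measure_biUnion_finset_le _ _).trans ?_)
        have hterm : ∀ i ∈ Finset.range N,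
            volume (Icc (F.f x ((i : ℝ) / N)) (F.f x (((i : ℝ) + (q : ℝ) / K) / N) + δ) ∪
             Icc (F.f x (((i : ℝ) + ((q : ℝ) + 1) / K) / N) - δ) (F.f x (((i : ℝ) + 1) / N))) ≤
            ENNReal.ofReal (η * (F.f x (((i : ℝ) + 1) / N) - F.f x ((i : ℝ) / N)) + 2 * δ) := by
          intro i hi
          have hi := Finset.mem_range.1 hi
          have b1 : F.f x ((i : ℝ) / N) ≤ F.f x (((i : ℝ) + (q : ℝ) / K) / N) := by
            refine hmo (node_mem hN hi.le) (hmem i hi _ a1 a2) ?_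
            gcongr; linarith
          have b2 : F.f x (((i : ℝ) + ((q : ℝ) + 1) / K) / N) ≤ F.f x (((i : ℝ) + 1) / N) := by
            refine hmo (hmem i hi _ a3 a4) (hmem i hi 1 zero_le_one le_rfl) ?_
            gcongr
          refine (measure_union_le _ _).trans ?_
          rw [Real.volume_Icc, Real.volume_Icc, ← ENNReal.ofReal_add (by linarith) (by linarith)]
          apply ENNReal.ofReal_le_ofReal
          have := H x hx i hi q hqK hcore.1 hcore.2
          linarith
        refine (Finset.sum_le_sum hterm).trans ?_
        rw [← ENNReal.ofReal_sum_of_nonneg]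
        · apply ENNReal.ofReal_le_ofReal
          rw [Finset.sum_add_distrib, ← Finset.mul_sum, Finset.sum_const, Finset.card_range,
            nsmul_eq_mul]
          have hs := Finset.sum_range_sub (fun i : ℕ => F.f x ((i : ℝ) / N)) N
          push_cast at hs
          rw [hs, zero_div, div_self hN'.ne', F.isFol.eq_bot x hx, F.isFol.eq_top x hx, hδ]
          apply le_of_eq
          field_simp
          ring
        · intro i hi
          have hi := Finset.mem_range.1 hi
          have : F.f x ((i : ℝ) / N) ≤ F.f x (((i : ℝ) + 1) / N) := by
            refine hmo (node_mem hN hi.le) (hmem i hi 1 zero_le_one le_rfl) ?_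
            gcongr; linarith
          have := mul_nonneg hη.le (sub_nonneg.2 this)
          positivity
    calc ∫⁻ x in unitInterval, (volume.restrict unitInterval) (Prod.mk x ⁻¹' Eᶜ)
        ≤ ∫⁻ x in unitInterval, (D.indicator 1 x + ENNReal.ofReal (2 * η)) :=
          setLIntegral_mono' measurableSet_Icc hfib
      _ = volume.restrict unitInterval D + ENNReal.ofReal (2 * η) := by
          rw [lintegral_add_right _ measurable_const, lintegral_indicator_one hDm,
            lintegral_const, Measure.restrict_apply_univ]
          simp [unitInterval]
      _ ≤ ENNReal.ofReal η + ENNReal.ofReal (2 * η) := by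
          gcongr
          exact (Measure.restrict_apply_le _ _).trans hDvol
      _ ≤ ENNReal.ofReal ρ := by
          rw [← ENNReal.ofReal_add hη.le (by positivity)]
          exact ENNReal.ofReal_le_ofReal (by linarith)
  · -- leaves
    intro y hy
    set T : Set ℝ := {x | x ∈ unitInterval ∧ ∃ z, |z - F.f x y| ≤ δ ∧ (x, z) ∈ E} with hT
    have hkey : ∀ x ∈ T, ∃ i : ℕ, ∃ q < K, (q : ℝ) ≤ K * x ∧ K * x ≤ q + 1 ∧
        ((i * K + q : ℕ) : ℝ) < N * K * y ∧ N * K * y < ((i * K + q : ℕ) : ℝ) + 1 := by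
      rintro x ⟨hx, z, hz, hxz⟩
      rw [hEmem] at hxz
      obtain ⟨i, hi, q, hq, h1, h2, h3, h4⟩ := hxz
      obtain ⟨a1, a2, a3, a4, -⟩ := hq01 q hq
      rw [hvI x hx] at h3 h4
      rw [abs_le] at hz
      refine ⟨i, q, hq, h1, h2, ?_, ?_⟩
      · have : ((i : ℝ) + (q : ℝ) / K) / N < y :=
          ((F.strictMono hC hβ hx).lt_iff_lt (hmem i hi _ a1 a2) hy).1 (by linarith)
        rw [div_lt_iff₀ hN'] at this
        have h5 := mul_lt_mul_of_pos_right this hK'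
        rw [add_mul, div_mul_cancel₀ _ hK'.ne'] at h5
        push_cast
        linarith
      · have : y < ((i : ℝ) + ((q : ℝ) + 1) / K) / N :=
          ((F.strictMono hC hβ hx).lt_iff_lt hy (hmem i hi _ a3 a4)).1 (by linarith)
        rw [lt_div_iff₀ hN'] at this
        have h5 := mul_lt_mul_of_pos_right this hK'
        rw [add_mul, div_mul_cancel₀ _ hK'.ne'] at h5
        push_cast
        linarith
    rcases T.eq_empty_or_nonempty with h0 | ⟨x₀, hx₀⟩
    · rw [h0]; simp
    · obtain ⟨i₀, q₀, hq₀, -, -, e1, e2⟩ := hkey x₀ hx₀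
      have hsub : T ⊆ Icc ((q₀ : ℝ) / K) (((q₀ : ℝ) + 1) / K) := by
        intro x hx
        obtain ⟨i, q, hq, f1, f2, f3, f4⟩ := hkey x hx
        have k1 : ((i * K + q : ℕ) : ℝ) < ((i₀ * K + q₀ : ℕ) : ℝ) + 1 := by linarith
        have k2 : ((i₀ * K + q₀ : ℕ) : ℝ) < ((i * K + q : ℕ) : ℝ) + 1 := by linarith
        have k1' : i * K + q < i₀ * K + q₀ + 1 := by exact_mod_cast k1
        have k2' : i₀ * K + q₀ < i * K + q + 1 := by exact_mod_cast k2
        have k3 : i * K + q = i₀ * K + q₀ := by omega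
        have k4 : q = q₀ := by
          have := congrArg (· % K) k3
          simpa [Nat.mul_add_mod', Nat.mod_eq_of_lt hq, Nat.mod_eq_of_lt hq₀] using this
        subst k4
        exact ⟨by rw [div_le_iff₀ hK']; linarith, by rw [le_div_iff₀ hK']; linarith⟩
      refine (measure_mono hsub).trans ?_
      rw [Real.volume_Icc]
      apply ENNReal.ofReal_le_ofReal
      rw [← sub_div, add_sub_cancel_left]
      exact hKρ

lemma Uset_dense {C β α ρ : ℝ} (hC : 1 < C) (hα : 0 ≤ α) (hαβ : α < β) (hβ1 : β < 1)
    (hρ : 0 < ρ) : IsDenseWrt (dalphaF α) (Uset C β ρ) := by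
  intro F ε hε
  have hC0 : 0 < C := by linarith
  have hβ : 0 < β := by linarith
  obtain ⟨δ, hδ, Hδ⟩ := dalpha_small (C := C) hC0 hα hαβ hε
  obtain ⟨G, hG1, hG2, cu, c₀, l, L, hcu, hc₀, hl, hL, hb⟩ := step1 hC hβ hβ1 F (half_pos hδ)
  obtain ⟨K₀, hK₀⟩ := exists_nat_gt (1 / ρ)
  have hK0' : (0 : ℝ) < K₀ := lt_trans (by positivity) hK₀
  have hK : 0 < K₀ := by exact_mod_cast hK0'
  obtain ⟨η, hη, hη1, hηρ⟩ : ∃ η : ℝ, 0 < η ∧ η < 1 ∧ 3 * η ≤ ρ :=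
    ⟨min (1 / 2) (ρ / 3), by positivity, (min_le_left _ _).trans_lt (by norm_num), by
      linarith [min_le_right (1 / 2 : ℝ) (ρ / 3)]⟩
  obtain ⟨H, N, hN, hH1, hH2, hH3⟩ := step2 hC hβ hβ1 G hcu hc₀ hl hL hb (half_pos hδ) hK hη hη1
  refine ⟨H, Uset_mem hC0 hβ H hN hK hη hη1 hηρ ?_ hH3, Hδ H F ?_ ?_⟩
  · rw [div_le_iff₀ hK0']
    rw [div_lt_iff₀ hρ] at hK₀
    linarith
  · intro x hx y hy
    have := abs_sub_le (H.f x y) (G.f x y) (F.f x y)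
    linarith [hH1 x hx y hy, hG1 x hx y hy]
  · intro x hx y hy
    have := abs_sub_le (H.fx x y) (G.fx x y) (F.fx x y)
    linarith [hH2 x hx y hy, hG2 x hx y hy]

/-- There is a residual subset `R` of `(F_(C,β), d_α)` such that for every
`f ∈ R`, for `μ̂`-almost every `y` the conditional measure `μ_y` is mutually singular with the
leaf measure `λ_y`; in particular it is not the case that `μ_y ≪ λ_y` for `μ̂`-a.e. `y`, so the
foliation is not leafwise absolutely continuous. -/
theorem stmt1 (C β α : ℝ) (hC : 1 < C) (hα : 0 ≤ α) (hαβ : α < β) (hβ : β < 1) :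
    ∃ R : Set (Fol C β),
      (∃ G : ℕ → Set (Fol C β),
        (∀ n, IsOpenWrt (dalphaF α) (G n) ∧ IsDenseWrt (dalphaF α) (G n)) ∧
        (⋂ n, G n) ⊆ R) ∧
      ∀ F ∈ R, ∀ ν : ℝ → Measure (ℝ × ℝ), IsDisint F ν →
        (∀ᵐ y ∂quotM F, (ν y).MutuallySingular (leafMeas F y)) ∧
        ¬ (∀ᵐ y ∂quotM F, ν y ≪ leafMeas F y) := by
  have hβ0 : 0 < β := by linarith
  refine ⟨⋂ n : ℕ, Uset C β ((1 / 2) ^ n), ⟨fun n => Uset C β ((1 / 2) ^ n), fun n =>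
    ⟨Uset_open C β α _, Uset_dense hC hα hαβ hβ (by positivity)⟩, Subset.rfl⟩, ?_⟩
  intro F hF ν hν
  have h1 := Uset_singular hβ0 F (fun n => mem_iInter.1 hF n) ν hν
  refine ⟨h1, fun h2 => quotM_ne_zero F ν hν ?_⟩
  have h3 : ∀ᵐ y ∂quotM F, False := by
    filter_upwards [h1, h2] with y hy1 hy2
    have h0 : ν y = 0 := Measure.eq_zero_of_absolutelyContinuous_of_mutuallySingular hy2 hy1
    exact (hν.1 y).ne_zero _ h0
  exact ae_eq_bot.1 (eventually_false_iff_eq_bot.1 h3)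

end
end

section
/- (F_(C,β), d_α) is a complete metric space: every sequence (f_n) in F_(C,β) that is Cauchy with respect to d_α converges in the metric d_α to some f ∈ F_(C,β). -/
open MeasureTheory Set Filter Topology
open scoped ENNReal

noncomputable section

/-- Pointwise form of being at distance at most `ε` in each of the terms of `d_α`. -/
def PtClose (α ε : ℝ) (f fx g gx : ℝ → ℝ → ℝ) : Prop :=
  (∀ x ∈ unitInterval, ∀ y ∈ unitInterval, |f x y - g x y| ≤ ε) ∧
  (∀ x ∈ unitInterval, ∀ y ∈ unitInterval, |fx x y - gx x y| ≤ ε) ∧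
  (∀ x ∈ unitInterval, ∀ y₁ ∈ unitInterval, ∀ y₂ ∈ unitInterval, y₁ ≠ y₂ →
    |(f x y₂ - g x y₂) - (f x y₁ - g x y₁)| / |y₂ - y₁| ^ α ≤ ε) ∧
  (∀ x ∈ unitInterval, ∀ y₁ ∈ unitInterval, ∀ y₂ ∈ unitInterval, y₁ ≠ y₂ →
    |(hinv f x y₂ - hinv g x y₂) - (hinv f x y₁ - hinv g x y₁)| / |y₂ - y₁| ^ α ≤ ε)

lemma dalpha_le_of_ptClose {α ε : ℝ} (hε : 0 ≤ ε) {f fx g gx : ℝ → ℝ → ℝ}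
    (h : PtClose α ε f fx g gx) : dalpha α f fx g gx ≤ 3 * ε := by
  obtain ⟨h1, h2, h3, h4⟩ := h
  have a1 : C0dist f g ≤ ε := by
    refine Real.sSup_le ?_ hε
    rintro r ⟨x, hx, y, hy, rfl⟩
    exact h1 x hx y hy
  have a2 : C0dist fx gx ≤ ε := by
    refine Real.sSup_le ?_ hε
    rintro r ⟨x, hx, y, hy, rfl⟩
    exact h2 x hx y hy
  have a3 : sSup {r | ∃ x ∈ unitInterval,
      r = max (holDist α (f x) (g x)) (holDist α (hinv f x) (hinv g x))} ≤ ε := by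
    refine Real.sSup_le ?_ hε
    rintro r ⟨x, hx, rfl⟩
    refine max_le ?_ ?_
    · refine Real.sSup_le ?_ hε
      rintro r ⟨y, hy, y', hy', hne, rfl⟩
      exact h3 x hx y hy y' hy' hne
    · refine Real.sSup_le ?_ hε
      rintro r ⟨y, hy, y', hy', hne, rfl⟩
      exact h4 x hx y hy y' hy' hne
  unfold dalpha
  linarith

/-- If everything is pointwise bounded, then the pointwise quantities are at most `d_α`. -/
lemma ptClose_of_bdd {α K : ℝ} {f fx g gx : ℝ → ℝ → ℝ}
    (hK : PtClose α K f fx g gx) : PtClose α (dalpha α f fx g gx) f fx g gx := by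
  obtain ⟨h1, h2, h3, h4⟩ := hK
  have K0 : 0 ≤ K := le_trans (abs_nonneg _) (h1 0 unitInterval.zero_mem 0 unitInterval.zero_mem)
  have n1 : 0 ≤ C0dist f g := by
    refine Real.sSup_nonneg ?_
    rintro r ⟨x, hx, y, hy, rfl⟩
    exact abs_nonneg _
  have n2 : 0 ≤ C0dist fx gx := by
    refine Real.sSup_nonneg ?_
    rintro r ⟨x, hx, y, hy, rfl⟩
    exact abs_nonneg _
  have nh : ∀ h k : ℝ → ℝ, 0 ≤ holDist α h k := by
    intro h k
    refine Real.sSup_nonneg ?_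
    rintro r ⟨y, hy, y', hy', hne, rfl⟩
    positivity
  have n3 : 0 ≤ sSup {r | ∃ x ∈ unitInterval,
      r = max (holDist α (f x) (g x)) (holDist α (hinv f x) (hinv g x))} := by
    refine Real.sSup_nonneg ?_
    rintro r ⟨x, hx, rfl⟩
    exact le_max_of_le_left (nh _ _)
  have u1 : ∀ x ∈ unitInterval, ∀ y ∈ unitInterval, |f x y - g x y| ≤ C0dist f g := by
    intro x hx y hy
    refine le_csSup ⟨K, ?_⟩ ⟨x, hx, y, hy, rfl⟩
    rintro r ⟨x, hx, y, hy, rfl⟩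
    exact h1 x hx y hy
  have u2 : ∀ x ∈ unitInterval, ∀ y ∈ unitInterval, |fx x y - gx x y| ≤ C0dist fx gx := by
    intro x hx y hy
    refine le_csSup ⟨K, ?_⟩ ⟨x, hx, y, hy, rfl⟩
    rintro r ⟨x, hx, y, hy, rfl⟩
    exact h2 x hx y hy
  have u3 : ∀ x ∈ unitInterval, max (holDist α (f x) (g x)) (holDist α (hinv f x) (hinv g x)) ≤
      sSup {r | ∃ x ∈ unitInterval,
      r = max (holDist α (f x) (g x)) (holDist α (hinv f x) (hinv g x))} := by
    intro x hx
    refine le_csSup ⟨K, ?_⟩ ⟨x, hx, rfl⟩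
    rintro r ⟨x, hx, rfl⟩
    refine max_le ?_ ?_
    · refine Real.sSup_le ?_ K0
      rintro r ⟨y, hy, y', hy', hne, rfl⟩
      exact h3 x hx y hy y' hy' hne
    · refine Real.sSup_le ?_ K0
      rintro r ⟨y, hy, y', hy', hne, rfl⟩
      exact h4 x hx y hy y' hy' hne
  unfold dalpha
  refine ⟨?_, ?_, ?_, ?_⟩
  · intro x hx y hy
    linarith [u1 x hx y hy]
  · intro x hx y hy
    linarith [u2 x hx y hy]
  · intro x hx y hy y' hy' hne
    have : |(f x y' - g x y') - (f x y - g x y)| / |y' - y| ^ α ≤ holDist α (f x) (g x) := by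
      refine le_csSup ⟨K, ?_⟩ ⟨y, hy, y', hy', hne, rfl⟩
      rintro r ⟨y, hy, y', hy', hne, rfl⟩
      exact h3 x hx y hy y' hy' hne
    linarith [u3 x hx, le_max_left (holDist α (f x) (g x)) (holDist α (hinv f x) (hinv g x))]
  · intro x hx y hy y' hy' hne
    have : |(hinv f x y' - hinv g x y') - (hinv f x y - hinv g x y)| / |y' - y| ^ α
        ≤ holDist α (hinv f x) (hinv g x) := by
      refine le_csSup ⟨K, ?_⟩ ⟨y, hy, y', hy', hne, rfl⟩
      rintro r ⟨y, hy, y', hy', hne, rfl⟩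
      exact h4 x hx y hy y' hy' hne
    linarith [u3 x hx, le_max_right (holDist α (f x) (g x)) (holDist α (hinv f x) (hinv g x))]

lemma IsFol.cont {C β : ℝ} (hβ0 : 0 < β) {f fx : ℝ → ℝ → ℝ}
    (hf : IsFol C β f fx) {x : ℝ} (hx : x ∈ unitInterval) : ContinuousOn (f x) unitInterval := by
  intro y hy
  have hlim : Tendsto (fun z : ℝ => C * |z - y| ^ β) (𝓝[unitInterval] y) (𝓝 0) := by
    have hc : Continuous (fun z : ℝ => C * |z - y| ^ β) :=
      continuous_const.mul ((continuous_abs.comp (continuous_id.sub continuous_const)).rpow_const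
        (fun _ => Or.inr hβ0.le))
    have := hc.tendsto y
    simp only [sub_self, abs_zero, Real.zero_rpow hβ0.ne', mul_zero] at this
    exact this.mono_left nhdsWithin_le_nhds
  rw [ContinuousWithinAt, tendsto_iff_dist_tendsto_zero]
  refine squeeze_zero' (Eventually.of_forall fun _ => dist_nonneg) ?_ hlim
  filter_upwards [self_mem_nhdsWithin] with z hz
  rw [Real.dist_eq]
  by_cases h : y = z
  · subst h
    simp [Real.zero_rpow hβ0.ne']
  · exact hf.upper x hx y hy z hz h

lemma IsFol.hinv_spec {C β : ℝ} (hβ0 : 0 < β) {f fx : ℝ → ℝ → ℝ}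
    (hf : IsFol C β f fx) {x z : ℝ} (hx : x ∈ unitInterval) (hz : z ∈ unitInterval) :
    hinv f x z ∈ unitInterval ∧ f x (hinv f x z) = z := by
  have h := intermediate_value_Icc (zero_le_one' ℝ) (hf.cont hβ0 hx)
  rw [hf.eq_bot x hx, hf.eq_top x hx] at h
  obtain ⟨y, hy, hyz⟩ := h hz
  exact ⟨Function.invFunOn_mem ⟨y, hy, hyz⟩, Function.invFunOn_eq ⟨y, hy, hyz⟩⟩

lemma IsFol.inv_bound {C β : ℝ} (hC : 1 < C) (hβ0 : 0 < β) {f fx : ℝ → ℝ → ℝ}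
    (hf : IsFol C β f fx) {x y z : ℝ} (hx : x ∈ unitInterval) (hy : y ∈ unitInterval)
    (hz : z ∈ unitInterval) : |z - y| ≤ (C * |f x z - f x y|) ^ β := by
  by_cases h : y = z
  · subst h
    simp [Real.zero_rpow hβ0.ne']
  have h1 := hf.lower x hx y hy z hz h
  have hC0 : 0 < C := by linarith
  have h2 : |z - y| ^ (1 / β) ≤ C * |f x z - f x y| := by
    rwa [inv_mul_le_iff₀ hC0] at h1
  have h3 := Real.rpow_le_rpow (by positivity) h2 hβ0.le
  rwa [← Real.rpow_mul (abs_nonneg _), one_div_mul_cancel hβ0.ne', Real.rpow_one] at h3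

lemma quot_bound {α β A a b c : ℝ} (hαβ : α < β) (hA : 0 ≤ A) (hc : 0 < c) (hc1 : c ≤ 1)
    (ha : |a| ≤ A * c ^ β) (hb : |b| ≤ A * c ^ β) : |a - b| / c ^ α ≤ 2 * A := by
  rw [div_le_iff₀ (Real.rpow_pos_of_pos hc _)]
  have h1 : c ^ β ≤ c ^ α := Real.rpow_le_rpow_of_exponent_ge hc hc1 hαβ.le
  have h2 := abs_sub a b
  have h3 := mul_le_mul_of_nonneg_left h1 hA
  linarith

lemma unit_abs {y z : ℝ} (hy : y ∈ unitInterval) (hz : z ∈ unitInterval) : |y - z| ≤ 1 := by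
  rw [abs_le]
  constructor <;> linarith [hy.1, hy.2, hz.1, hz.2]

lemma IsFol.bdd {C β α : ℝ} (hC : 1 < C) (hβ0 : 0 < β) (hαβ : α < β)
    {f fx g gx : ℝ → ℝ → ℝ} (hf : IsFol C β f fx) (hg : IsFol C β g gx) :
    ∃ K, PtClose α K f fx g gx := by
  have hcomp : IsCompact MSq := isCompact_Icc.prod isCompact_Icc
  obtain ⟨B, hB⟩ := hcomp.exists_bound_of_continuousOn (hf.derivCont.sub hg.derivCont)
  have hC0 : 0 < C := by linarith
  have hCb : 0 ≤ C ^ β := (Real.rpow_pos_of_pos hC0 _).le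
  refine ⟨max (max 1 B) (max (2 * C) (2 * C ^ β)), ?_, ?_, ?_, ?_⟩
  · intro x hx y hy
    exact le_max_of_le_left (le_max_of_le_left (unit_abs (hf.mapsTo x hx y hy) (hg.mapsTo x hx y hy)))
  · intro x hx y hy
    exact le_max_of_le_left (le_max_of_le_right (hB (x, y) ⟨hx, hy⟩))
  · intro x hx y hy z hz hne
    refine le_max_of_le_right (le_max_of_le_left ?_)
    have e : (f x z - g x z) - (f x y - g x y) = (f x z - f x y) - (g x z - g x y) := by ring
    rw [e]
    exact quot_bound hαβ hC0.le (abs_pos.2 (sub_ne_zero.2 (Ne.symm hne))) (unit_abs hz hy)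
      (hf.upper x hx y hy z hz hne) (hg.upper x hx y hy z hz hne)
  · intro x hx y hy z hz hne
    refine le_max_of_le_right (le_max_of_le_right ?_)
    have e : (hinv f x z - hinv g x z) - (hinv f x y - hinv g x y)
      = (hinv f x z - hinv f x y) - (hinv g x z - hinv g x y) := by ring
    have key : ∀ {h hx' : ℝ → ℝ → ℝ}, IsFol C β h hx' →
        |hinv h x z - hinv h x y| ≤ C ^ β * |z - y| ^ β := by
      intro h hx' hh
      have s1 := hh.hinv_spec hβ0 hx hz
      have s2 := hh.hinv_spec hβ0 hx hy
      have := hh.inv_bound hC hβ0 hx s2.1 s1.1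
      rwa [s1.2, s2.2, Real.mul_rpow hC0.le (abs_nonneg _)] at this
    rw [e]
    exact quot_bound hαβ hCb (abs_pos.2 (sub_ne_zero.2 (Ne.symm hne))) (unit_abs hz hy)
      (key hf) (key hg)

/-- `(F_(C,β), d_α)` is complete: every `d_α`-Cauchy sequence in `F_(C,β)`
converges in the metric `d_α` to some element of `F_(C,β)`. -/
theorem stmt3 (C β α : ℝ) (hC : 1 < C) (hα : 0 ≤ α) (hαβ : α < β) (hβ : β < 1)
    (fseq : ℕ → Fol C β)
    (hCauchy : ∀ ε : ℝ, 0 < ε → ∃ N : ℕ, ∀ k ≥ N, ∀ l ≥ N,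
      dalphaF α (fseq k) (fseq l) < ε) :
    ∃ F : Fol C β, ∀ ε : ℝ, 0 < ε → ∃ N : ℕ, ∀ k ≥ N, dalphaF α (fseq k) F < ε := by
  have hβ0 : 0 < β := lt_of_le_of_lt hα hαβ
  have hC0 : 0 < C := by linarith
  have hcl : ∀ ε : ℝ, 0 < ε → ∃ N : ℕ, ∀ k ≥ N, ∀ l ≥ N,
      PtClose α ε (fseq k).f (fseq k).fx (fseq l).f (fseq l).fx := by
    intro ε hε
    obtain ⟨N, hN⟩ := hCauchy ε hε
    refine ⟨N, fun k hk l hl => ?_⟩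
    have hd : dalpha α (fseq k).f (fseq k).fx (fseq l).f (fseq l).fx ≤ ε := (hN k hk l hl).le
    obtain ⟨K, hK⟩ := (fseq k).isFol.bdd hC hβ0 hαβ (fseq l).isFol
    obtain ⟨h1, h2, h3, h4⟩ := ptClose_of_bdd hK
    exact ⟨fun x hx y hy => (h1 x hx y hy).trans hd, fun x hx y hy => (h2 x hx y hy).trans hd,
      fun x hx y hy z hz hne => (h3 x hx y hy z hz hne).trans hd,
      fun x hx y hy z hz hne => (h4 x hx y hy z hz hne).trans hd⟩
  -- pointwise limits
  have hlf : ∀ x y, ∃ a, x ∈ unitInterval → y ∈ unitInterval →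
      Tendsto (fun n => (fseq n).f x y) atTop (𝓝 a) := by
    intro x y
    by_cases h : x ∈ unitInterval ∧ y ∈ unitInterval
    · have hc : CauchySeq (fun n => (fseq n).f x y) := by
        rw [Metric.cauchySeq_iff]
        intro ε hε
        obtain ⟨N, hN⟩ := hcl (ε / 2) (by linarith)
        refine ⟨N, fun k hk l hl => ?_⟩
        rw [Real.dist_eq]
        linarith [(hN k hk l hl).1 x h.1 y h.2]
      obtain ⟨a, ha⟩ := cauchySeq_tendsto_of_complete hc
      exact ⟨a, fun _ _ => ha⟩
    · exact ⟨0, fun h1 h2 => absurd ⟨h1, h2⟩ h⟩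
  have hlfx : ∀ x y, ∃ a, x ∈ unitInterval → y ∈ unitInterval →
      Tendsto (fun n => (fseq n).fx x y) atTop (𝓝 a) := by
    intro x y
    by_cases h : x ∈ unitInterval ∧ y ∈ unitInterval
    · have hc : CauchySeq (fun n => (fseq n).fx x y) := by
        rw [Metric.cauchySeq_iff]
        intro ε hε
        obtain ⟨N, hN⟩ := hcl (ε / 2) (by linarith)
        refine ⟨N, fun k hk l hl => ?_⟩
        rw [Real.dist_eq]
        linarith [(hN k hk l hl).2.1 x h.1 y h.2]
      obtain ⟨a, ha⟩ := cauchySeq_tendsto_of_complete hc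
      exact ⟨a, fun _ _ => ha⟩
    · exact ⟨0, fun h1 h2 => absurd ⟨h1, h2⟩ h⟩
  choose f hf using hlf
  choose fx hfx using hlfx
  -- the limit of the pairwise bounds
  have hufx : ∀ ε : ℝ, 0 < ε → ∃ N : ℕ, ∀ k ≥ N, ∀ x ∈ unitInterval, ∀ y ∈ unitInterval,
      |(fseq k).fx x y - fx x y| ≤ ε := by
    intro ε hε
    obtain ⟨N, hN⟩ := hcl ε hε
    refine ⟨N, fun k hk x hx y hy => ?_⟩
    refine le_of_tendsto ((tendsto_const_nhds.sub (hfx x y hx hy)).abs) ?_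
    filter_upwards [eventually_ge_atTop N] with l hl
    exact (hN k hk l hl).2.1 x hx y hy
  have hmv : ∀ ε : ℝ, 0 < ε → ∃ N : ℕ, ∀ k ≥ N, ∀ y ∈ unitInterval, ∀ x ∈ unitInterval,
      ∀ x' ∈ unitInterval,
      |((fseq k).f x' y - f x' y) - ((fseq k).f x y - f x y)| ≤ ε * |x' - x| := by
    intro ε hε
    obtain ⟨N, hN⟩ := hcl ε hε
    refine ⟨N, fun k hk y hy x hx x' hx' => ?_⟩
    refine le_of_tendsto (((tendsto_const_nhds.sub (hf x' y hx' hy)).sub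
      (tendsto_const_nhds.sub (hf x y hx hy))).abs) ?_
    filter_upwards [eventually_ge_atTop N] with l hl
    have := Convex.norm_image_sub_le_of_norm_hasDerivWithin_le
      (f := fun t => (fseq k).f t y - (fseq l).f t y)
      (f' := fun t => (fseq k).fx t y - (fseq l).fx t y) (s := unitInterval) (C := ε)
      (fun t ht => ((fseq k).isFol.hasDeriv y hy t ht).sub ((fseq l).isFol.hasDeriv y hy t ht))
      (fun t ht => (hN k hk l hl).2.1 t ht y hy) (convex_Icc 0 1) hx hx'
    simpa only [Real.norm_eq_abs] using this
  have hF : IsFol C β f fx := by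
    refine ⟨?_, ?_, ?_, ?_, ?_, ?_, ?_, ?_⟩
    · intro x hx y hy
      exact isClosed_Icc.mem_of_tendsto (hf x y hx hy)
        (Eventually.of_forall fun n => (fseq n).isFol.mapsTo x hx y hy)
    · intro y hy x hx
      rw [hasDerivWithinAt_iff_isLittleO, Asymptotics.isLittleO_iff]
      intro c hc
      obtain ⟨N1, h1⟩ := hmv (c / 3) (by linarith)
      obtain ⟨N2, h2⟩ := hufx (c / 3) (by linarith)
      have h1 := h1 (max N1 N2) (le_max_left _ _) y hy x hx
      have h2 := h2 (max N1 N2) (le_max_right _ _) x hx y hy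
      have h3 := (fseq (max N1 N2)).isFol.hasDeriv y hy x hx
      rw [hasDerivWithinAt_iff_isLittleO, Asymptotics.isLittleO_iff] at h3
      have h3 := h3 (c := c / 3) (by linarith)
      filter_upwards [h3, self_mem_nhdsWithin] with x' h3 hx'
      have h1 := h1 x' hx'
      simp only [Real.norm_eq_abs, smul_eq_mul] at h3 ⊢
      have h4 : |(x' - x) * ((fseq (max N1 N2)).fx x y - fx x y)| ≤ c / 3 * |x' - x| := by
        rw [abs_mul, mul_comm]
        exact mul_le_mul_of_nonneg_right h2 (abs_nonneg _)
      generalize (fseq (max N1 N2)).f x' y = a1 at *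
      generalize (fseq (max N1 N2)).f x y = a2 at *
      generalize (fseq (max N1 N2)).fx x y = a3 at *
      rw [abs_le] at *
      constructor <;> nlinarith [h1.1, h1.2, h3.1, h3.2, h4.1, h4.2]
    · have hu : TendstoUniformlyOn (fun n (p : ℝ × ℝ) => (fseq n).fx p.1 p.2)
          (fun p : ℝ × ℝ => fx p.1 p.2) atTop MSq := by
        rw [Metric.tendstoUniformlyOn_iff]
        intro ε hε
        obtain ⟨N, hN⟩ := hufx (ε / 2) (by linarith)
        filter_upwards [eventually_ge_atTop N] with n hn p hp
        rw [dist_comm, Real.dist_eq]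
        linarith [hN n hn p.1 hp.1 p.2 hp.2]
      exact hu.continuousOn (Eventually.of_forall fun n => (fseq n).isFol.derivCont).frequently
    · intro y hy
      refine tendsto_nhds_unique (hf 0 y unitInterval.zero_mem hy) ?_
      simp only [(fseq _).isFol.eq_id y hy]
      exact tendsto_const_nhds
    · intro x hx
      refine tendsto_nhds_unique (hf x 0 hx unitInterval.zero_mem) ?_
      simp only [(fseq _).isFol.eq_bot x hx]
      exact tendsto_const_nhds
    · intro x hx
      refine tendsto_nhds_unique (hf x 1 hx unitInterval.one_mem) ?_
      simp only [(fseq _).isFol.eq_top x hx]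
      exact tendsto_const_nhds
    · intro x hx y hy z hz hne
      exact ge_of_tendsto ((hf x z hx hz).sub (hf x y hx hy)).abs
        (Eventually.of_forall fun n => (fseq n).isFol.lower x hx y hy z hz hne)
    · intro x hx y hy z hz hne
      exact le_of_tendsto ((hf x z hx hz).sub (hf x y hx hy)).abs
        (Eventually.of_forall fun n => (fseq n).isFol.upper x hx y hy z hz hne)
  -- convergence of the inverses
  have hinvlim : ∀ x ∈ unitInterval, ∀ z ∈ unitInterval,
      Tendsto (fun n => hinv (fseq n).f x z) atTop (𝓝 (hinv f x z)) := by
    intro x hx z hz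
    have s := hF.hinv_spec hβ0 hx hz
    have hlim : Tendsto (fun n => (C * |z - (fseq n).f x (hinv f x z)|) ^ β) atTop (𝓝 0) := by
      have h1 := ((((tendsto_const_nhds (x := z)).sub (hf x _ hx s.1)).abs).const_mul C).rpow_const
        (p := β) (Or.inr hβ0.le)
      rw [s.2] at h1
      simpa only [sub_self, abs_zero, Real.zero_rpow hβ0.ne', mul_zero] using h1
    rw [tendsto_iff_dist_tendsto_zero]
    refine squeeze_zero (fun _ => dist_nonneg) (fun n => ?_) hlim
    have sn := (fseq n).isFol.hinv_spec hβ0 hx hz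
    have := (fseq n).isFol.inv_bound hC hβ0 hx s.1 sn.1
    rwa [sn.2] at this
  refine ⟨⟨f, fx, hF⟩, fun ε hε => ?_⟩
  obtain ⟨N, hN⟩ := hcl (ε / 4) (by linarith)
  refine ⟨N, fun k hk => ?_⟩
  have hev := eventually_ge_atTop N
  have hP : PtClose α (ε / 4) (fseq k).f (fseq k).fx f fx := by
    refine ⟨?_, ?_, ?_, ?_⟩
    · intro x hx y hy
      refine le_of_tendsto ((tendsto_const_nhds.sub (hf x y hx hy)).abs) ?_
      filter_upwards [hev] with l hl
      exact (hN k hk l hl).1 x hx y hy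
    · intro x hx y hy
      refine le_of_tendsto ((tendsto_const_nhds.sub (hfx x y hx hy)).abs) ?_
      filter_upwards [hev] with l hl
      exact (hN k hk l hl).2.1 x hx y hy
    · intro x hx y hy z hz hne
      refine le_of_tendsto ((((tendsto_const_nhds.sub (hf x z hx hz)).sub
        (tendsto_const_nhds.sub (hf x y hx hy))).abs).div_const _) ?_
      filter_upwards [hev] with l hl
      exact (hN k hk l hl).2.2.1 x hx y hy z hz hne
    · intro x hx y hy z hz hne
      refine le_of_tendsto ((((tendsto_const_nhds.sub (hinvlim x hx z hz)).sub
        (tendsto_const_nhds.sub (hinvlim x hx y hy))).abs).div_const _) ?_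
      filter_upwards [hev] with l hl
      exact (hN k hk l hl).2.2.2 x hx y hy z hz hne
  have := dalpha_le_of_ptClose (by linarith) hP
  change dalpha α (fseq k).f (fseq k).fx f fx < ε
  linarith

end
end

section
/- For all n, m ∈ ℕ with m ≥ 1 and every closed interval I = [b₁,b₂] ⊆ [0,1] with rational endpoints, the set A_{n,m,I} is open in the metric space (F_(C,β), d_α). -/
open MeasureTheory Set Filter Topology
open scoped ENNReal

noncomputable section

lemma dist_le_dalpha {C γ α : ℝ} (F G : Fol C γ) (x : ℝ) (hx : x ∈ unitInterval)
    (y : ℝ) (hy : y ∈ unitInterval) : |F.f x y - G.f x y| ≤ dalphaF α F G := by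
  have h1 : |F.f x y - G.f x y| ≤ C0dist F.f G.f := by
    apply le_csSup
    · refine ⟨1, ?_⟩
      rintro r ⟨x, hx, y, hy, rfl⟩
      have h1 := F.isFol.mapsTo x hx y hy
      have h2 := G.isFol.mapsTo x hx y hy
      rw [abs_le]
      constructor <;> linarith [h1.1, h1.2, h2.1, h2.2]
    · exact ⟨x, hx, y, hy, rfl⟩
  have h2 : 0 ≤ C0dist F.fx G.fx := by
    apply Real.sSup_nonneg
    rintro r ⟨x, hx, y, hy, rfl⟩
    positivity
  have h3 : 0 ≤ sSup {r | ∃ x ∈ unitInterval,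
      r = max (holDist α (F.f x) (G.f x)) (holDist α (hinv F.f x) (hinv G.f x))} := by
    apply Real.sSup_nonneg
    rintro r ⟨x, hx, rfl⟩
    apply le_max_of_le_left
    apply Real.sSup_nonneg
    rintro r ⟨x, hx, y, hy, _, rfl⟩
    positivity
  unfold dalphaF dalpha
  linarith

lemma cont_f {C γ : ℝ} (F : Fol C γ) (y : ℝ) (hy : y ∈ unitInterval) :
    ContinuousOn (fun x => F.f x y) unitInterval :=
  fun x hx => (F.isFol.hasDeriv y hy x hx).continuousWithinAt

lemma strip_vol {C γ : ℝ} (F : Fol C γ) (y : ℝ) (hy : y ∈ unitInterval) (d : ℝ) :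
    volume (regionBetween (fun x => F.f x y - 2 * d) (fun x => F.f x y + 2 * d) unitInterval)
      ≤ ENNReal.ofReal (4 * d) := by
  have hc := cont_f F y hy
  have hm : MeasurableSet (unitInterval : Set ℝ) := measurableSet_Icc
  rw [Measure.volume_eq_prod, volume_regionBetween_eq_lintegral
    (f := fun x => F.f x y - 2 * d) (g := fun x => F.f x y + 2 * d)
    ((hc.sub continuousOn_const).aemeasurable hm) ((hc.add continuousOn_const).aemeasurable hm) hm]
  have : ∀ x : ℝ, ((fun x => F.f x y + 2 * d) - (fun x => F.f x y - 2 * d)) x = 4 * d := by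
    intro x; simp only [Pi.sub_apply]; ring
  simp only [this]
  simp [unitInterval]

lemma meas_le {C γ d : ℝ} (F G : Fol C γ) (n i : ℕ) (hi : i < 2 ^ n) (S : Set (ℝ × ℝ))
    (h : ∀ x ∈ unitInterval, ∀ y ∈ unitInterval, |F.f x y - G.f x y| ≤ d) :
    muM (Pelt G.f n i ∩ S) ≤ muM (Pelt F.f n i ∩ S) + ENNReal.ofReal (8 * d) := by
  have hp : (0 : ℝ) < 2 ^ n := by positivity
  have hi' : (i : ℝ) + 1 ≤ 2 ^ n := by exact_mod_cast hi
  have ha : (i : ℝ) / 2 ^ n ∈ unitInterval := by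
    constructor
    · positivity
    · rw [div_le_one hp]; linarith
  have hb : ((i : ℝ) + 1) / 2 ^ n ∈ unitInterval := by
    constructor
    · positivity
    · rw [div_le_one hp]; linarith
  have hd : 0 ≤ d := (abs_nonneg _).trans (h _ ha _ ha)
  set a := (i : ℝ) / 2 ^ n with hadef
  set b := ((i : ℝ) + 1) / 2 ^ n with hbdef
  have hsub : Pelt G.f n i ∩ S ⊆ (Pelt F.f n i ∩ S) ∪
      (regionBetween (fun x => F.f x a - 2 * d) (fun x => F.f x a + 2 * d) unitInterval ∪
       regionBetween (fun x => F.f x b - 2 * d) (fun x => F.f x b + 2 * d) unitInterval) := by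
    rintro ⟨x, y⟩ ⟨⟨hx, h1, h2⟩, hS⟩
    simp only at hx h1 h2
    have e1 := abs_le.1 (h x hx a ha)
    have e2 := abs_le.1 (h x hx b hb)
    rw [← hadef] at h1
    rw [← hbdef] at h2
    by_cases c1 : F.f x a ≤ y
    · by_cases c2 : y < F.f x b
      · exact Or.inl ⟨⟨hx, c1, c2⟩, hS⟩
      · refine Or.inr (Or.inr ⟨hx, ?_, ?_⟩) <;> simp only <;> push Not at c2 <;> linarith
    · refine Or.inr (Or.inl ⟨hx, ?_, ?_⟩) <;> simp only <;> push Not at c1 <;> linarith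
  have hle : ∀ T : Set (ℝ × ℝ), muM T ≤ volume T := fun T => Measure.restrict_apply_le _ _
  calc _ ≤ _ := measure_mono hsub
    _ ≤ _ := measure_union_le _ _
    _ ≤ _ := by
      gcongr
      refine (measure_union_le _ _).trans ?_
      have : (8 * d) = 4 * d + 4 * d := by ring
      rw [this, ENNReal.ofReal_add (by positivity) (by positivity)]
      exact add_le_add ((hle _).trans (strip_vol F a ha d)) ((hle _).trans (strip_vol F b hb d))

lemma meas_pos {C γ : ℝ} (F : Fol C γ) (n i : ℕ) (hi : i < 2 ^ n) :
    muM (Pelt F.f n i) ≠ 0 := by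
  have hp : (0 : ℝ) < 2 ^ n := by positivity
  have hi' : (i : ℝ) + 1 ≤ 2 ^ n := by exact_mod_cast hi
  have ha : (i : ℝ) / 2 ^ n ∈ unitInterval := by
    constructor
    · positivity
    · rw [div_le_one hp]; linarith
  have hb : ((i : ℝ) + 1) / 2 ^ n ∈ unitInterval := by
    constructor
    · positivity
    · rw [div_le_one hp]; linarith
  have hab : (i : ℝ) / 2 ^ n < ((i : ℝ) + 1) / 2 ^ n := by gcongr; linarith
  set a := (i : ℝ) / 2 ^ n with hadef
  set b := ((i : ℝ) + 1) / 2 ^ n with hbdef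
  have h0 : (0 : ℝ) ∈ unitInterval := ⟨le_rfl, zero_le_one⟩
  obtain ⟨u, hau, hub⟩ := exists_between hab
  obtain ⟨v, huv, hvb⟩ := exists_between hub
  have e1 : ∀ᶠ x in 𝓝[unitInterval] (0 : ℝ), F.f x a < u := by
    apply (cont_f F a ha 0 h0).eventually_lt_const
    simpa [F.isFol.eq_id a ha] using hau
  have e2 : ∀ᶠ x in 𝓝[unitInterval] (0 : ℝ), v < F.f x b := by
    apply (cont_f F b hb 0 h0).eventually_const_lt
    simpa [F.isFol.eq_id b hb] using hvb
  obtain ⟨δ, hδ, hh⟩ := Metric.mem_nhdsWithin_iff.1 (e1.and e2)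
  have hsub : Ioo 0 (min δ 1) ×ˢ Ioo u v ⊆ Pelt F.f n i ∩ MSq := by
    rintro ⟨x, y⟩ ⟨hx, hy⟩
    simp only at hx hy
    have hx1 : x ∈ unitInterval := ⟨hx.1.le, hx.2.le.trans (min_le_right _ _)⟩
    have := @hh x ⟨by
      rw [Metric.mem_ball, Real.dist_eq, sub_zero, abs_of_pos hx.1]
      exact hx.2.trans_le (min_le_left _ _), hx1⟩
    obtain ⟨k1, k2⟩ := this
    refine ⟨⟨hx1, ?_, ?_⟩, hx1, ?_, ?_⟩
    · exact k1.le.trans hy.1.le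
    · exact hy.2.trans k2
    · exact ha.1.trans (hau.le.trans hy.1.le)
    · exact hy.2.le.trans (hvb.le.trans hb.2)
  have hpos : 0 < volume (Ioo 0 (min δ 1) ×ˢ Ioo u v : Set (ℝ × ℝ)) := by
    refine (isOpen_Ioo.prod isOpen_Ioo).measure_pos volume ?_
    exact (nonempty_Ioo.2 (lt_min hδ one_pos)).prod (nonempty_Ioo.2 huv)
  have := hpos.trans_le (measure_mono hsub)
  have h2 : volume (Pelt F.f n i ∩ MSq) ≤ muM (Pelt F.f n i) := Measure.le_restrict_apply _ _
  exact (this.trans_le h2).ne'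

lemma meas_fin (S : Set (ℝ × ℝ)) : muM S ≠ ⊤ := by
  have : muM S ≤ volume MSq := by
    unfold muM
    exact (measure_mono (subset_univ S)).trans (by simp)
  refine ne_top_of_le_ne_top ?_ this
  exact (isCompact_Icc.prod isCompact_Icc).measure_lt_top.ne

lemma meas_tendsto {C γ : ℝ} (α : ℝ) (F : Fol C γ) (n i : ℕ) (hi : i < 2 ^ n)
    (S : Set (ℝ × ℝ)) :
    Tendsto (fun G : Fol C γ => muM (Pelt G.f n i ∩ S))
      (comap (fun G => dalphaF α G F) (𝓝 0)) (𝓝 (muM (Pelt F.f n i ∩ S))) := by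
  have hc : Tendsto (fun G : Fol C γ => ENNReal.ofReal (8 * dalphaF α G F))
      (comap (fun G => dalphaF α G F) (𝓝 0)) (𝓝 0) := by
    have h : Tendsto (fun t : ℝ => ENNReal.ofReal (8 * t)) (𝓝 0) (𝓝 0) := by
      have : Continuous (fun t : ℝ => ENNReal.ofReal (8 * t)) := ENNReal.continuous_ofReal.comp (by fun_prop)
      simpa using this.tendsto 0
    exact h.comp tendsto_comap
  refine tendsto_of_tendsto_of_tendsto_of_le_of_le
    (g := fun G => muM (Pelt F.f n i ∩ S) - ENNReal.ofReal (8 * dalphaF α G F))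
    (h := fun G => muM (Pelt F.f n i ∩ S) + ENNReal.ofReal (8 * dalphaF α G F)) ?_ ?_ ?_ ?_
  · simpa using ENNReal.Tendsto.sub (tendsto_const_nhds (x := muM (Pelt F.f n i ∩ S))) hc
      (Or.inl (meas_fin _))
  · simpa using (tendsto_const_nhds (x := muM (Pelt F.f n i ∩ S))).add hc
  · intro G
    exact tsub_le_iff_right.2 (meas_le G F n i hi S
      (fun x hx y hy => dist_le_dalpha G F x hx y hy))
  · intro G
    refine meas_le F G n i hi S (fun x hx y hy => ?_)
    rw [abs_sub_comm]
    exact dist_le_dalpha G F x hx y hy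

/-- For all `n`, `m ≥ 1`, and every closed interval `I = [b₁,b₂] ⊆ [0,1]`
with rational endpoints, the set `A_{n,m,I}` is open in `(F_(C,β), d_α)`. -/
theorem stmt9 (C β α : ℝ) (hC : 1 < C) (hα : 0 ≤ α) (hαβ : α < β) (hβ : β < 1)
    (n m : ℕ) (hm : 1 ≤ m) (b₁ b₂ : ℚ)
    (hb₁ : 0 ≤ b₁) (hb : b₁ ≤ b₂) (hb₂ : b₂ ≤ 1) :
    IsOpenWrt (fun F G : Fol C β => dalphaF α F G) (Aset C β n m (b₁ : ℝ) (b₂ : ℝ)) := by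
  intro F hF
  have key : ∀ᶠ G in comap (fun G : Fol C β => dalphaF α G F) (𝓝 0),
      ∀ i ∈ Finset.range (2 ^ n),
      muM (Pelt G.f n i ∩ Itilde b₁ b₂) / muM (Pelt G.f n i) < 1 / (m : ℝ≥0∞) ∨
      1 - 1 / (m : ℝ≥0∞) < muM (Pelt G.f n i ∩ Itilde b₁ b₂) / muM (Pelt G.f n i) := by
    rw [Filter.eventually_all_finset]
    intro i hi
    have hi := Finset.mem_range.1 hi
    have t1 := meas_tendsto α F n i hi (Itilde b₁ b₂)
    have t2 := meas_tendsto α F n i hi univ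
    simp only [inter_univ] at t2
    have t := ENNReal.Tendsto.div t1 (Or.inr (meas_pos F n i hi)) t2 (Or.inr (meas_fin _))
    rcases hF i hi with h | h
    · exact (t.eventually_lt_const h).mono fun _ => Or.inl
    · exact (t.eventually_const_lt h).mono fun _ => Or.inr
  rw [eventually_comap, Metric.eventually_nhds_iff] at key
  obtain ⟨ε, hε, hk⟩ := key
  refine ⟨ε, hε, fun G hG i hi => ?_⟩
  refine hk (y := dalphaF α G F) ?_ G rfl i (Finset.mem_range.2 hi)
  have h0 : (0 : ℝ) ∈ unitInterval := ⟨le_rfl, zero_le_one⟩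
  have : 0 ≤ dalphaF α G F := (abs_nonneg _).trans (dist_le_dalpha G F 0 h0 0 h0)
  rw [Real.dist_eq, sub_zero, abs_of_nonneg this]
  exact hG

end
end
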